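/- arXiv:q-alg/9412003 — 3 statements merged into one kernel-verified Lean document; each statement's English description precedes it below -/
import Mathlib

section
/- In a braided quantum group, the two candidate definitions of the secondary braiding agree: (id²⊗ε)(id⊗σ⁻¹)(φ⊗id)σ = (ε⊗id²)(σ⁻¹⊗id)(id⊗φ)σ. This common map is denoted τ. -/
open TensorProduct LinearMap

noncomputable section

variable (A : Type*) [Ring A] [Algebra ℂ A]

/-- Two-fold tensor product of `A` with itself. -/
abbrev T2 := A ⊗[ℂ] A
/-- Three-fold tensor product (right associated). -/
abbrev T3 := A ⊗[ℂ] (A ⊗[ℂ] A)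
/-- Four-fold tensor product (right associated). -/
abbrev T4 := A ⊗[ℂ] (A ⊗[ℂ] (A ⊗[ℂ] A))

variable {A}

/-- The multiplication of `A` as a linear map. -/
def mA : T2 A →ₗ[ℂ] A := LinearMap.mul' ℂ A

/-- `f ⊗ id` : a map of `T2` acting on the factors 1,2 of `T3`. -/
def op12 (f : T2 A →ₗ[ℂ] T2 A) : T3 A →ₗ[ℂ] T3 A :=
  (TensorProduct.assoc ℂ A A A).toLinearMap ∘ₗ f.rTensor A ∘ₗ
    (TensorProduct.assoc ℂ A A A).symm.toLinearMap

/-- `id ⊗ f` : a map of `T2` acting on the factors 2,3 of `T3`. -/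
def op23 (f : T2 A →ₗ[ℂ] T2 A) : T3 A →ₗ[ℂ] T3 A := f.lTensor A

/-- `f ⊗ id ⊗ id` : a map of `T2` acting on the factors 1,2 of `T4`. -/
def op12_4 (f : T2 A →ₗ[ℂ] T2 A) : T4 A →ₗ[ℂ] T4 A :=
  (TensorProduct.assoc ℂ A A (T2 A)).toLinearMap ∘ₗ f.rTensor (T2 A) ∘ₗ
    (TensorProduct.assoc ℂ A A (T2 A)).symm.toLinearMap

/-- `id ⊗ f ⊗ id` : a map of `T2` acting on the factors 2,3 of `T4`. -/
def op23_4 (f : T2 A →ₗ[ℂ] T2 A) : T4 A →ₗ[ℂ] T4 A := (op12 f).lTensor A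

/-- `id ⊗ id ⊗ f` : a map of `T2` acting on the factors 3,4 of `T4`. -/
def op34_4 (f : T2 A →ₗ[ℂ] T2 A) : T4 A →ₗ[ℂ] T4 A := (f.lTensor A).lTensor A

/-- `m ⊗ id : T3 → T2`. -/
def m12 : T3 A →ₗ[ℂ] T2 A :=
  (mA (A := A)).rTensor A ∘ₗ (TensorProduct.assoc ℂ A A A).symm.toLinearMap

/-- `id ⊗ m : T3 → T2`. -/
def m23 : T3 A →ₗ[ℂ] T2 A := (mA (A := A)).lTensor A

/-- `m ⊗ m : T4 → T2`. -/
def mm : T4 A →ₗ[ℂ] T2 A := m12 ∘ₗ ((mA (A := A)).lTensor A).lTensor A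

/-- A braided quantum group structure on the algebra `A` (Đurđević).
`φ` is the coproduct, `ε` the counit, `κ` the antipode, `σ` the braiding
(with given inverse `σ'`). -/
structure BQG (A : Type*) [Ring A] [Algebra ℂ A] where
  φ : A →ₗ[ℂ] T2 A
  ε : A →ₗ[ℂ] ℂ
  κ : A →ₗ[ℂ] A
  σ : T2 A →ₗ[ℂ] T2 A
  σ' : T2 A →ₗ[ℂ] T2 A
  σ_comp : σ ∘ₗ σ' = LinearMap.id
  comp_σ : σ' ∘ₗ σ = LinearMap.id
  κ_bij : Function.Bijective κ
  /-- coassociativity `(φ⊗id)φ = (id⊗φ)φ` -/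
  coassoc : (TensorProduct.assoc ℂ A A A).toLinearMap ∘ₗ φ.rTensor A ∘ₗ φ = φ.lTensor A ∘ₗ φ
  /-- `(ε⊗id)φ = id` -/
  counit_left : (TensorProduct.lid ℂ A).toLinearMap ∘ₗ ε.rTensor A ∘ₗ φ = LinearMap.id
  /-- `(id⊗ε)φ = id` -/
  counit_right : (TensorProduct.rid ℂ A).toLinearMap ∘ₗ ε.lTensor A ∘ₗ φ = LinearMap.id
  /-- `σ(m⊗id) = (id⊗m)(σ⊗id)(id⊗σ)` -/
  braid_mul_left : σ ∘ₗ m12 = m23 ∘ₗ op12 σ ∘ₗ op23 σ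
  /-- `σ(id⊗m) = (m⊗id)(id⊗σ)(σ⊗id)` -/
  braid_mul_right : σ ∘ₗ m23 = m12 ∘ₗ op23 σ ∘ₗ op12 σ
  /-- `φm = (m⊗m)(id⊗σ⊗id)(φ⊗φ)` -/
  comul_mul : φ ∘ₗ mA = mm ∘ₗ op23_4 σ ∘ₗ
      (TensorProduct.assoc ℂ A A (T2 A)).toLinearMap ∘ₗ φ.rTensor (T2 A) ∘ₗ φ.lTensor A
  /-- `(σ⊗id²)(id⊗φ⊗id)(σ⁻¹⊗id)(id⊗φ) = (id²⊗σ)(id⊗φ⊗id)(id⊗σ⁻¹)(φ⊗id)` -/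
  mixed_coassoc :
    op12_4 σ ∘ₗ ((TensorProduct.assoc ℂ A A A).toLinearMap ∘ₗ φ.rTensor A).lTensor A ∘ₗ
        op12 σ' ∘ₗ φ.lTensor A
      = op34_4 σ ∘ₗ ((TensorProduct.assoc ℂ A A A).toLinearMap ∘ₗ φ.rTensor A).lTensor A ∘ₗ
        op23 σ' ∘ₗ (TensorProduct.assoc ℂ A A A).toLinearMap ∘ₗ φ.rTensor A
  /-- `m(κ⊗id)φ = 1ε` -/
  antipode_left : mA ∘ₗ κ.rTensor A ∘ₗ φ = Algebra.linearMap ℂ A ∘ₗ ε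
  /-- `m(id⊗κ)φ = 1ε` -/
  antipode_right : mA ∘ₗ κ.lTensor A ∘ₗ φ = Algebra.linearMap ℂ A ∘ₗ ε

namespace BQG

variable {A : Type*} [Ring A] [Algebra ℂ A] (G : BQG A)

/-- `φ ⊗ id : T2 → T3`. -/
def φ1 : T2 A →ₗ[ℂ] T3 A := (TensorProduct.assoc ℂ A A A).toLinearMap ∘ₗ G.φ.rTensor A

/-- `id ⊗ φ : T2 → T3`. -/
def φ2 : T2 A →ₗ[ℂ] T3 A := G.φ.lTensor A

/-- `id² ⊗ ε : T3 → T2`. -/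
def ε3r : T3 A →ₗ[ℂ] T2 A :=
  ((TensorProduct.rid ℂ A).toLinearMap ∘ₗ G.ε.lTensor A).lTensor A

/-- `ε ⊗ id² : T3 → T2`. -/
def ε3l : T3 A →ₗ[ℂ] T2 A :=
  (TensorProduct.lid ℂ (T2 A)).toLinearMap ∘ₗ G.ε.rTensor (T2 A)

/-- The secondary braiding `τ = (id²⊗ε)(id⊗σ⁻¹)(φ⊗id)σ`. -/
def τ : T2 A →ₗ[ℂ] T2 A := G.ε3r ∘ₗ op23 G.σ' ∘ₗ G.φ1 ∘ₗ G.σ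

/-- `ε ⊗ ε : T2 → ℂ`. -/
def εε : T2 A →ₗ[ℂ] ℂ :=
  (TensorProduct.lid ℂ ℂ).toLinearMap ∘ₗ G.ε.rTensor ℂ ∘ₗ G.ε.lTensor A

end BQG

namespace BQGProof

variable {A : Type*} [Ring A] [Algebra ℂ A]

/-- `q ⊗ id : T3 → A`. -/
def qL (q : T2 A →ₗ[ℂ] ℂ) : T3 A →ₗ[ℂ] A :=
  (TensorProduct.lid ℂ A).toLinearMap ∘ₗ q.rTensor A ∘ₗ
    (TensorProduct.assoc ℂ A A A).symm.toLinearMap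

/-- `id ⊗ q : T3 → A`. -/
def qR (q : T2 A →ₗ[ℂ] ℂ) : T3 A →ₗ[ℂ] A :=
  (TensorProduct.rid ℂ A).toLinearMap ∘ₗ q.lTensor A

/-- `ε ⊗ id`. -/
def eL (ε : A →ₗ[ℂ] ℂ) : T2 A →ₗ[ℂ] A := (TensorProduct.lid ℂ A).toLinearMap ∘ₗ ε.rTensor A

/-- `id ⊗ ε`. -/
def eR (ε : A →ₗ[ℂ] ℂ) : T2 A →ₗ[ℂ] A := (TensorProduct.rid ℂ A).toLinearMap ∘ₗ ε.lTensor A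

/-- convolution -/
def conv (G : BQG A) (f g : A →ₗ[ℂ] A) : A →ₗ[ℂ] A := mA ∘ₗ TensorProduct.map f g ∘ₗ G.φ

lemma conv_assoc (G : BQG A) (f g h : A →ₗ[ℂ] A) :
    conv G (conv G f g) h = conv G f (conv G g h) := by
  have h1 : conv G (conv G f g) h = mA ∘ₗ TensorProduct.map f (mA ∘ₗ TensorProduct.map g h) ∘ₗ
      ((TensorProduct.assoc ℂ A A A).toLinearMap ∘ₗ G.φ.rTensor A ∘ₗ G.φ) := by
    ext a
    simp only [conv, LinearMap.comp_apply]
    generalize G.φ a = u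
    induction u using TensorProduct.induction_on with
    | zero => simp
    | add x y hx hy => simp only [map_add, hx, hy]
    | tmul x y =>
      simp only [TensorProduct.map_tmul, LinearMap.rTensor_tmul, LinearMap.comp_apply]
      generalize G.φ x = u
      induction u using TensorProduct.induction_on with
      | zero => simp
      | add x y hx hy => simp only [map_add, TensorProduct.add_tmul, hx, hy]
      | tmul x y => simp [mA, mul_assoc]
  rw [h1, G.coassoc]
  ext a
  simp only [conv, LinearMap.comp_apply]
  generalize G.φ a = u
  induction u using TensorProduct.induction_on with
  | zero => simp
  | add x y hx hy => simp only [map_add, hx, hy]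
  | tmul x y => simp

lemma eR_φ (G : BQG A) (a : A) : eR G.ε (G.φ a) = a := LinearMap.congr_fun G.counit_right a
lemma eL_φ (G : BQG A) (a : A) : eL G.ε (G.φ a) = a := LinearMap.congr_fun G.counit_left a

lemma conv_id_κ (G : BQG A) : conv G LinearMap.id G.κ = Algebra.linearMap ℂ A ∘ₗ G.ε :=
  G.antipode_right
lemma conv_κ_id (G : BQG A) : conv G G.κ LinearMap.id = Algebra.linearMap ℂ A ∘ₗ G.ε :=
  G.antipode_left

lemma conv_one (G : BQG A) (f : A →ₗ[ℂ] A) :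
    conv G f (Algebra.linearMap ℂ A ∘ₗ G.ε) = f := by
  ext a
  conv_rhs => rw [← eR_φ G a]
  simp only [conv, LinearMap.comp_apply]
  generalize G.φ a = u
  induction u using TensorProduct.induction_on with
  | zero => simp
  | add x y hx hy => simp only [map_add, hx, hy]
  | tmul x y => simp [mA, eR, Algebra.algebraMap_eq_smul_one]

lemma one_conv (G : BQG A) (f : A →ₗ[ℂ] A) :
    conv G (Algebra.linearMap ℂ A ∘ₗ G.ε) f = f := by
  ext a
  conv_rhs => rw [← eL_φ G a]
  simp only [conv, LinearMap.comp_apply]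
  generalize G.φ a = u
  induction u using TensorProduct.induction_on with
  | zero => simp
  | add x y hx hy => simp only [map_add, hx, hy]
  | tmul x y => simp [mA, eL, Algebra.algebraMap_eq_smul_one]

lemma conv_mulLeft (G : BQG A) (a : A) (f g : A →ₗ[ℂ] A) :
    conv G (LinearMap.mulLeft ℂ a ∘ₗ f) g = LinearMap.mulLeft ℂ a ∘ₗ conv G f g := by
  ext b
  simp only [conv, LinearMap.comp_apply]
  generalize G.φ b = u
  induction u using TensorProduct.induction_on with
  | zero => simp
  | add x y hx hy => simp only [map_add, hx, hy]
  | tmul x y => simp [mA, mul_assoc]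

lemma conv_mulRight (G : BQG A) (a : A) (f g : A →ₗ[ℂ] A) :
    conv G f (LinearMap.mulRight ℂ a ∘ₗ g) = LinearMap.mulRight ℂ a ∘ₗ conv G f g := by
  ext b
  simp only [conv, LinearMap.comp_apply]
  generalize G.φ b = u
  induction u using TensorProduct.induction_on with
  | zero => simp
  | add x y hx hy => simp only [map_add, hx, hy]
  | tmul x y => simp [mA, mul_assoc]

/-- `(εm⊗id)(id⊗σ)(φ⊗id) = id⊗ε` -/
lemma E1 (G : BQG A) : qL (G.ε ∘ₗ mA) ∘ₗ op23 G.σ ∘ₗ G.φ1 = eR G.ε := by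
  apply TensorProduct.ext'
  intro a b
  set f : A →ₗ[ℂ] A := (qL (G.ε ∘ₗ mA) ∘ₗ op23 G.σ ∘ₗ G.φ1) ∘ₗ TensorProduct.mk ℂ A A a with hf
  have key : conv G f LinearMap.id = LinearMap.mulLeft ℂ a ∘ₗ LinearMap.id := by
    ext b
    have h := LinearMap.congr_fun G.comul_mul (a ⊗ₜ[ℂ] b)
    have h2 : eL G.ε (G.φ (a * b)) = a * b := eL_φ G _
    simp only [LinearMap.comp_apply, mA, LinearMap.mul'_apply] at h
    rw [h] at h2
    simp only [LinearMap.comp_apply, LinearMap.mulLeft_apply, LinearMap.id_apply]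
    rw [← h2]
    simp only [conv, hf, LinearMap.comp_apply, LinearMap.lTensor_tmul, LinearMap.rTensor_tmul,
      BQG.φ1]
    generalize G.φ b = v
    induction v using TensorProduct.induction_on with
    | zero => simp
    | add x y hx hy => simp only [map_add, TensorProduct.tmul_add, hx, hy]
    | tmul x y =>
      simp only [TensorProduct.map_tmul, LinearMap.comp_apply, TensorProduct.mk_apply,
        LinearMap.rTensor_tmul]
      generalize G.φ a = u
      induction u using TensorProduct.induction_on with
      | zero => simp
      | add x y hx hy => simp only [map_add, TensorProduct.add_tmul, hx, hy]
      | tmul z w =>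
        simp only [LinearEquiv.coe_coe, TensorProduct.assoc_tmul, op23, op23_4, op12,
          LinearMap.lTensor_tmul, LinearMap.comp_apply, TensorProduct.assoc_symm_tmul,
          LinearMap.rTensor_tmul]
        generalize G.σ (w ⊗ₜ[ℂ] x) = s
        induction s using TensorProduct.induction_on with
        | zero => simp
        | add x y hx hy => simp only [map_add, TensorProduct.add_tmul, TensorProduct.tmul_add, hx, hy]
        | tmul s t => simp [qL, eL, mA, mm, m12]
  have h3 : f = LinearMap.mulLeft ℂ a ∘ₗ (Algebra.linearMap ℂ A ∘ₗ G.ε) := by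
    rw [← conv_one G f, ← conv_id_κ, ← conv_assoc, key, conv_mulLeft]
  have h4 := LinearMap.congr_fun h3 b
  have h5 : f b = (qL (G.ε ∘ₗ mA) ∘ₗ op23 G.σ ∘ₗ G.φ1) (a ⊗ₜ[ℂ] b) := rfl
  rw [← h5, h4]
  simp [eR, Algebra.algebraMap_eq_smul_one]

/-- `(id⊗εm)(σ⊗id)(id⊗φ) = ε⊗id` -/
lemma E2 (G : BQG A) : qR (G.ε ∘ₗ mA) ∘ₗ op12 G.σ ∘ₗ G.φ2 = eL G.ε := by
  apply TensorProduct.ext'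
  intro a b
  set f : A →ₗ[ℂ] A :=
    (qR (G.ε ∘ₗ mA) ∘ₗ op12 G.σ ∘ₗ G.φ2) ∘ₗ (TensorProduct.mk ℂ A A).flip b with hf
  have key : conv G LinearMap.id f = LinearMap.mulRight ℂ b ∘ₗ LinearMap.id := by
    ext a
    have h := LinearMap.congr_fun G.comul_mul (a ⊗ₜ[ℂ] b)
    have h2 : eR G.ε (G.φ (a * b)) = a * b := eR_φ G _
    simp only [LinearMap.comp_apply, mA, LinearMap.mul'_apply] at h
    rw [h] at h2
    simp only [LinearMap.comp_apply, LinearMap.mulRight_apply, LinearMap.id_apply]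
    rw [← h2]
    simp only [conv, hf, LinearMap.comp_apply, LinearMap.lTensor_tmul, LinearMap.rTensor_tmul,
      BQG.φ2]
    generalize G.φ a = v
    induction v using TensorProduct.induction_on with
    | zero => simp
    | add x y hx hy => simp only [map_add, TensorProduct.add_tmul, hx, hy]
    | tmul z w =>
      simp only [TensorProduct.map_tmul, LinearMap.comp_apply, TensorProduct.mk_apply,
        LinearMap.flip_apply, LinearMap.lTensor_tmul]
      generalize G.φ b = u
      induction u using TensorProduct.induction_on with
      | zero => simp
      | add x y hx hy => simp only [map_add, TensorProduct.tmul_add, hx, hy]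
      | tmul x y =>
        simp only [LinearEquiv.coe_coe, TensorProduct.assoc_tmul, op23, op23_4, op12,
          LinearMap.lTensor_tmul, LinearMap.comp_apply, TensorProduct.assoc_symm_tmul,
          LinearMap.rTensor_tmul]
        generalize G.σ (w ⊗ₜ[ℂ] x) = s
        induction s using TensorProduct.induction_on with
        | zero => simp
        | add x y hx hy => simp only [map_add, TensorProduct.add_tmul, TensorProduct.tmul_add, hx, hy]
        | tmul s t => simp [qR, eR, mA, mm, m12]
  have h3 : f = LinearMap.mulRight ℂ b ∘ₗ (Algebra.linearMap ℂ A ∘ₗ G.ε) := by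
    rw [← one_conv G f, ← conv_κ_id, conv_assoc, key, conv_mulRight]
  have h4 := LinearMap.congr_fun h3 a
  have h5 : f a = (qR (G.ε ∘ₗ mA) ∘ₗ op12 G.σ ∘ₗ G.φ2) (a ⊗ₜ[ℂ] b) := rfl
  rw [← h5, h4]
  simp [eL, Algebra.algebraMap_eq_smul_one]

lemma eL_φ1 (G : BQG A) (x : T2 A) : G.ε3l (G.φ1 x) = x := by
  induction x using TensorProduct.induction_on with
  | zero => simp
  | add x y hx hy => simp only [map_add, hx, hy]
  | tmul a b =>
    conv_rhs => rw [← eL_φ G a]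
    simp only [BQG.φ1, LinearMap.comp_apply, LinearMap.rTensor_tmul]
    generalize G.φ a = u
    induction u using TensorProduct.induction_on with
    | zero => simp
    | add x y hx hy => simp only [map_add, TensorProduct.add_tmul, hx, hy]
    | tmul x y => simp [BQG.ε3l, eL, TensorProduct.smul_tmul']

lemma eR_φ2 (G : BQG A) (x : T2 A) : G.ε3r (G.φ2 x) = x := by
  induction x using TensorProduct.induction_on with
  | zero => simp
  | add x y hx hy => simp only [map_add, hx, hy]
  | tmul a b =>
    conv_rhs => rw [← eR_φ G b]
    rfl

/-- `ε ⊗ id³`. -/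
def e4l (ε : A →ₗ[ℂ] ℂ) : T4 A →ₗ[ℂ] T3 A :=
  (TensorProduct.lid ℂ (T3 A)).toLinearMap ∘ₗ ε.rTensor (T3 A)

/-- `id³ ⊗ ε`. -/
def e4r (ε : A →ₗ[ℂ] ℂ) : T4 A →ₗ[ℂ] T3 A := ((eR ε).lTensor A).lTensor A

lemma e4l_lTensor (ε : A →ₗ[ℂ] ℂ) (G : BQG A) (hε : ε = G.ε) (g : T2 A →ₗ[ℂ] T3 A) (x : T3 A) :
    e4l ε (g.lTensor A x) = g (G.ε3l x) := by
  subst hε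
  induction x using TensorProduct.induction_on with
  | zero => simp
  | add x y hx hy => simp only [map_add, hx, hy]
  | tmul a b => simp [e4l, BQG.ε3l]

/-- `w ⊗ id`, for `w : T2 → T3`. -/
def wid (w : T2 A →ₗ[ℂ] T3 A) : T3 A →ₗ[ℂ] T4 A :=
  ((TensorProduct.assoc ℂ A A A).toLinearMap.lTensor A) ∘ₗ
  (TensorProduct.assoc ℂ A (T2 A) A).toLinearMap ∘ₗ w.rTensor A ∘ₗ
    (TensorProduct.assoc ℂ A A A).symm.toLinearMap

lemma wid_eq (G : BQG A) (x : T3 A) :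
    op12_4 G.σ ((G.φ1).lTensor A (op12 G.σ' x)) = wid (op12 G.σ ∘ₗ G.φ2 ∘ₗ G.σ') x := by
  obtain ⟨y, rfl⟩ := (TensorProduct.assoc ℂ A A A).surjective x
  induction y using TensorProduct.induction_on with
  | zero => simp
  | add x y hx hy => simp only [map_add, hx, hy]
  | tmul y c =>
    simp only [op12, wid, LinearMap.comp_apply, LinearEquiv.coe_coe, LinearEquiv.symm_apply_apply,
      LinearMap.rTensor_tmul]
    generalize G.σ' y = z
    induction z using TensorProduct.induction_on with
    | zero => simp
    | add x y hx hy => simp only [map_add, TensorProduct.add_tmul, hx, hy]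
    | tmul a b =>
      simp only [BQG.φ1, BQG.φ2, TensorProduct.assoc_tmul, LinearMap.lTensor_tmul,
        LinearMap.rTensor_tmul, LinearMap.comp_apply, LinearEquiv.coe_coe]
      generalize G.φ b = u
      induction u using TensorProduct.induction_on with
      | zero => simp
      | add x y hx hy => simp only [map_add, TensorProduct.add_tmul, TensorProduct.tmul_add, hx, hy]
      | tmul s t =>
        simp only [op12_4, TensorProduct.assoc_tmul, TensorProduct.assoc_symm_tmul,
          LinearMap.rTensor_tmul, LinearMap.comp_apply, LinearEquiv.coe_coe]
        generalize G.σ (a ⊗ₜ[ℂ] s) = z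
        induction z using TensorProduct.induction_on with
        | zero => simp
        | add x y hx hy => simp only [map_add, TensorProduct.add_tmul, hx, hy]
        | tmul a b => simp

lemma qL_wid (G : BQG A) (q : T2 A →ₗ[ℂ] ℂ) (w : T2 A →ₗ[ℂ] T3 A) (x : T3 A) :
    qL q (e4l G.ε (wid w x)) = qL (q ∘ₗ G.ε3l ∘ₗ w) x := by
  obtain ⟨y, rfl⟩ := (TensorProduct.assoc ℂ A A A).surjective x
  induction y using TensorProduct.induction_on with
  | zero => simp
  | add x y hx hy => simp only [map_add, hx, hy]
  | tmul y c =>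
    simp only [qL, wid, LinearMap.comp_apply, LinearEquiv.coe_coe, LinearEquiv.symm_apply_apply,
      LinearMap.rTensor_tmul]
    generalize w y = z
    induction z using TensorProduct.induction_on with
    | zero => simp
    | add x y hx hy => simp only [map_add, TensorProduct.add_tmul, hx, hy]
    | tmul a b =>
      induction b using TensorProduct.induction_on with
      | zero => simp
      | add x y hx hy => simp only [map_add, TensorProduct.add_tmul, TensorProduct.tmul_add, hx, hy]
      | tmul s t => simp [e4l, BQG.ε3l, mul_smul]

lemma qR_lTensor (G : BQG A) (q : T2 A →ₗ[ℂ] ℂ) (w : T2 A →ₗ[ℂ] T3 A) (x : T3 A) :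
    qR q (e4r G.ε (w.lTensor A x)) = qR (q ∘ₗ G.ε3r ∘ₗ w) x := by
  induction x using TensorProduct.induction_on with
  | zero => simp
  | add x y hx hy => simp only [map_add, hx, hy]
  | tmul a b => rfl

lemma e4r_wid (G : BQG A) (w : T2 A →ₗ[ℂ] T2 A) (x : T2 A) :
    e4r G.ε (wid (op12 G.σ ∘ₗ G.φ2 ∘ₗ w) (G.φ2 x)) = op12 G.σ (G.φ2 (w x)) := by
  induction x using TensorProduct.induction_on with
  | zero => simp
  | add x y hx hy => simp only [map_add, hx, hy]
  | tmul a b =>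
    conv_rhs => rw [← eR_φ G b]
    simp only [BQG.φ2, LinearMap.lTensor_tmul]
    generalize G.φ b = u
    induction u using TensorProduct.induction_on with
    | zero => simp
    | add x y hx hy => simp only [map_add, TensorProduct.tmul_add, hx, hy]
    | tmul s t =>
      simp only [wid, eR, LinearMap.comp_apply, LinearEquiv.coe_coe, TensorProduct.assoc_symm_tmul,
        LinearMap.rTensor_tmul, LinearMap.lTensor_tmul, TensorProduct.rid_tmul,
        TensorProduct.tmul_smul, map_smul]
      generalize op12 G.σ (G.φ.lTensor A (w (a ⊗ₜ[ℂ] s))) = z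
      induction z using TensorProduct.induction_on with
      | zero => simp
      | add x y hx hy => simp only [map_add, TensorProduct.add_tmul, smul_add, hx, hy]
      | tmul a b =>
        induction b using TensorProduct.induction_on with
        | zero => simp
        | add x y hx hy =>
          simp only [map_add, TensorProduct.add_tmul, TensorProduct.tmul_add, smul_add, hx, hy]
        | tmul s t => simp [e4r, eR]

lemma mixed (G : BQG A) (x : T2 A) :
    wid (op12 G.σ ∘ₗ G.φ2 ∘ₗ G.σ') (G.φ2 x)
      = (op23 G.σ ∘ₗ G.φ1 ∘ₗ G.σ').lTensor A (G.φ1 x) := by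
  rw [← wid_eq]
  have h := LinearMap.congr_fun G.mixed_coassoc x
  simp only [op23, LinearMap.lTensor_comp]
  exact h

lemma eL_qL (G : BQG A) (q : T2 A →ₗ[ℂ] ℂ) (x : T2 A) :
    G.ε (qL q (G.φ2 x)) = q x := by
  induction x using TensorProduct.induction_on with
  | zero => simp
  | add x y hx hy => simp only [map_add, hx, hy]
  | tmul a b =>
    conv_rhs => rw [← eR_φ G b]
    simp only [BQG.φ2, LinearMap.lTensor_tmul]
    generalize G.φ b = u
    induction u using TensorProduct.induction_on with
    | zero => simp
    | add x y hx hy => simp only [map_add, TensorProduct.tmul_add, hx, hy]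
    | tmul s t => simp [qL, eR, mul_comm]

lemma eR_qR (G : BQG A) (q : T2 A →ₗ[ℂ] ℂ) (x : T2 A) :
    G.ε (qR q (G.φ1 x)) = q x := by
  induction x using TensorProduct.induction_on with
  | zero => simp
  | add x y hx hy => simp only [map_add, hx, hy]
  | tmul a b =>
    conv_rhs => rw [← eL_φ G a]
    simp only [BQG.φ1, LinearMap.rTensor_tmul, LinearMap.comp_apply]
    generalize G.φ a = u
    induction u using TensorProduct.induction_on with
    | zero => simp
    | add x y hx hy => simp only [map_add, TensorProduct.add_tmul, hx, hy]
    | tmul s t => simp [qR, eL, mul_comm, ← TensorProduct.smul_tmul']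

lemma ε_eR_eq (ε : A →ₗ[ℂ] ℂ) : ε ∘ₗ eR ε = ε ∘ₗ eL ε := by
  apply TensorProduct.ext'
  intro a b
  simp [eR, eL, mul_comm]

/-- `(id⊗ε)σ⁻¹ = (e⊗id)(id⊗φ)` with `e = (ε⊗ε)σ⁻¹`. -/
lemma r_eq (G : BQG A) :
    eR G.ε ∘ₗ G.σ' = qL (G.ε ∘ₗ eR G.ε ∘ₗ G.σ') ∘ₗ G.φ2 := by
  have h1 : ∃ g, eR G.ε ∘ₗ G.σ' = qL g ∘ₗ G.φ2 := by
    refine ⟨(G.ε ∘ₗ mA) ∘ₗ G.ε3l ∘ₗ (op12 G.σ ∘ₗ G.φ2 ∘ₗ G.σ'), ?_⟩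
    rw [← E1]
    refine LinearMap.ext fun x => ?_
    simp only [LinearMap.comp_apply]
    have h := congrArg (e4l G.ε) (mixed G x)
    rw [e4l_lTensor _ G rfl, eL_φ1] at h
    have h' := congrArg (qL (G.ε ∘ₗ mA)) h
    rw [qL_wid] at h'
    exact h'.symm
  obtain ⟨g, hg⟩ := h1
  have : G.ε ∘ₗ eR G.ε ∘ₗ G.σ' = g := by
    rw [hg]
    exact LinearMap.ext fun x => eL_qL G g x
  rw [this, hg]

/-- `(ε⊗id)σ⁻¹ = (id⊗e)(φ⊗id)` with `e = (ε⊗ε)σ⁻¹`. -/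
lemma l_eq (G : BQG A) :
    eL G.ε ∘ₗ G.σ' = qR (G.ε ∘ₗ eR G.ε ∘ₗ G.σ') ∘ₗ G.φ1 := by
  have h1 : ∃ g, eL G.ε ∘ₗ G.σ' = qR g ∘ₗ G.φ1 := by
    refine ⟨(G.ε ∘ₗ mA) ∘ₗ G.ε3r ∘ₗ (op23 G.σ ∘ₗ G.φ1 ∘ₗ G.σ'), ?_⟩
    rw [← E2]
    refine LinearMap.ext fun x => ?_
    simp only [LinearMap.comp_apply]
    have h := congrArg (e4r G.ε) (mixed G x)
    rw [e4r_wid] at h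
    have h' := congrArg (qR (G.ε ∘ₗ mA)) h
    rw [qR_lTensor] at h'
    exact h'
  obtain ⟨g, hg⟩ := h1
  have : G.ε ∘ₗ eR G.ε ∘ₗ G.σ' = g := by
    rw [← LinearMap.comp_assoc, ε_eR_eq, LinearMap.comp_assoc, hg]
    exact LinearMap.ext fun x => eR_qR G g x
  rw [this, hg]

lemma X_eq (G : BQG A) (x : T3 A) : G.ε3r (op23 G.σ' x) = (eR G.ε ∘ₗ G.σ').lTensor A x := by
  rw [LinearMap.lTensor_comp]; rfl

lemma Y_eq (G : BQG A) (x : T3 A) : G.ε3l (op12 G.σ' x) =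
    (eL G.ε ∘ₗ G.σ').rTensor A ((TensorProduct.assoc ℂ A A A).symm x) := by
  simp only [op12, LinearMap.comp_apply, LinearMap.rTensor_comp, LinearEquiv.coe_coe]
  generalize G.σ'.rTensor A ((TensorProduct.assoc ℂ A A A).symm x) = y
  induction y using TensorProduct.induction_on with
  | zero => simp
  | add x y hx hy => simp only [map_add, hx, hy]
  | tmul y c =>
    induction y using TensorProduct.induction_on with
    | zero => simp
    | add x y hx hy => simp only [map_add, TensorProduct.add_tmul, hx, hy]
    | tmul a b => simp [BQG.ε3l, eL, TensorProduct.smul_tmul']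

lemma XY (G : BQG A) (e : T2 A →ₗ[ℂ] ℂ) (x : T2 A) :
    (qL e ∘ₗ G.φ2).lTensor A (G.φ1 x) =
    (qR e ∘ₗ G.φ1).rTensor A ((TensorProduct.assoc ℂ A A A).symm (G.φ2 x)) := by
  induction x using TensorProduct.induction_on with
  | zero => simp
  | add x y hx hy => simp only [map_add, hx, hy]
  | tmul a b =>
    have h1 : ∀ u : T2 A, (qL e ∘ₗ G.φ2).lTensor A ((TensorProduct.assoc ℂ A A A) (u ⊗ₜ[ℂ] b)) =
        (qL e).lTensor A ((TensorProduct.assoc ℂ A A (T2 A)) (u ⊗ₜ[ℂ] G.φ b)) := by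
      intro u
      induction u using TensorProduct.induction_on with
      | zero => simp
      | add x y hx hy => simp only [map_add, TensorProduct.add_tmul, hx, hy]
      | tmul s t => simp [BQG.φ2]
    have h2 : ∀ v : T2 A, (qR e ∘ₗ G.φ1).rTensor A
        ((TensorProduct.assoc ℂ A A A).symm (a ⊗ₜ[ℂ] v)) =
        (qL e).lTensor A ((TensorProduct.assoc ℂ A A (T2 A)) (G.φ a ⊗ₜ[ℂ] v)) := by
      intro v
      induction v using TensorProduct.induction_on with
      | zero => simp
      | add x y hx hy => simp only [map_add, TensorProduct.tmul_add, hx, hy]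
      | tmul s t =>
        simp only [BQG.φ1, TensorProduct.assoc_symm_tmul, LinearMap.rTensor_tmul,
          LinearMap.comp_apply]
        generalize G.φ a = u
        induction u using TensorProduct.induction_on with
        | zero => simp
        | add x y hx hy => simp only [map_add, TensorProduct.add_tmul, hx, hy]
        | tmul y z => simp [qR, qL, TensorProduct.smul_tmul']
    have h3 : G.φ1 (a ⊗ₜ[ℂ] b) = (TensorProduct.assoc ℂ A A A) (G.φ a ⊗ₜ[ℂ] b) := rfl
    have h4 : G.φ2 (a ⊗ₜ[ℂ] b) = a ⊗ₜ[ℂ] G.φ b := rfl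
    rw [h3, h4, h1, h2]

end BQGProof

/-- The two candidate definitions of the secondary braiding agree:
`(id²⊗ε)(id⊗σ⁻¹)(φ⊗id)σ = (ε⊗id²)(σ⁻¹⊗id)(id⊗φ)σ`. -/
theorem bqg_tau_well_defined {A : Type*} [Ring A] [Algebra ℂ A] (G : BQG A) :
    G.ε3r ∘ₗ op23 G.σ' ∘ₗ G.φ1 ∘ₗ G.σ
      = G.ε3l ∘ₗ op12 G.σ' ∘ₗ G.φ2 ∘ₗ G.σ := by
  refine LinearMap.ext fun x => ?_
  simp only [LinearMap.comp_apply]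
  rw [BQGProof.X_eq, BQGProof.Y_eq, BQGProof.r_eq, BQGProof.l_eq, BQGProof.XY]
end
end

section
/- In a braided quantum group, the secondary braiding τ := (id²⊗ε)(id⊗σ⁻¹)(φ⊗id)σ is bijective, with inverse characterized by τ⁻¹σ = (id²⊗ε)(id⊗σ)(φ⊗id) = (ε⊗id²)(σ⊗id)(id⊗φ). -/
open TensorProduct LinearMap

noncomputable section

variable (A : Type*) [Ring A] [Algebra ℂ A]

variable {A}

namespace BQGProof

set_option linter.all false

variable {A : Type*} [Ring A] [Algebra ℂ A] (G : BQG A)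

/-- `ε ⊗ id : T2 → A`. -/
def e1 : T2 A →ₗ[ℂ] A := (TensorProduct.lid ℂ A).toLinearMap ∘ₗ G.ε.rTensor A
/-- `id ⊗ ε : T2 → A`. -/
def e2 : T2 A →ₗ[ℂ] A := (TensorProduct.rid ℂ A).toLinearMap ∘ₗ G.ε.lTensor A
/-- `h ⊗ id : T3 → A`. -/
def h12 (h : T2 A →ₗ[ℂ] ℂ) : T3 A →ₗ[ℂ] A :=
  (TensorProduct.lid ℂ A).toLinearMap ∘ₗ h.rTensor A ∘ₗ
    (TensorProduct.assoc ℂ A A A).symm.toLinearMap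
/-- `id ⊗ h : T3 → A`. -/
def h23 (h : T2 A →ₗ[ℂ] ℂ) : T3 A →ₗ[ℂ] A :=
  (TensorProduct.rid ℂ A).toLinearMap ∘ₗ h.lTensor A
/-- `j ⊗ id : T3 → T2`. -/
def j12 (j : T2 A →ₗ[ℂ] A) : T3 A →ₗ[ℂ] T2 A :=
  j.rTensor A ∘ₗ (TensorProduct.assoc ℂ A A A).symm.toLinearMap
/-- `Y ⊗ id : T3 → T4`. -/
def ex (Y : T2 A →ₗ[ℂ] T3 A) : T3 A →ₗ[ℂ] T4 A :=
  (TensorProduct.assoc ℂ A A A).toLinearMap.lTensor A ∘ₗ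
    (TensorProduct.assoc ℂ A (T2 A) A).toLinearMap ∘ₗ Y.rTensor A ∘ₗ
    (TensorProduct.assoc ℂ A A A).symm.toLinearMap
/-- `ε ⊗ id³`. -/
def ε14 : T4 A →ₗ[ℂ] T3 A :=
  (TensorProduct.lid ℂ (T3 A)).toLinearMap ∘ₗ G.ε.rTensor (T3 A)

/-- the counit composed with the product -/
def g : T2 A →ₗ[ℂ] ℂ := G.ε ∘ₗ mA
/-- `ρ` -/
def ρ : T2 A →ₗ[ℂ] T2 A := G.ε3r ∘ₗ op23 G.σ ∘ₗ G.φ1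
/-- `ρ` with the counit on the left -/
def ρl : T2 A →ₗ[ℂ] T2 A := G.ε3l ∘ₗ op12 G.σ ∘ₗ G.φ2
/-- `a ⊗ b ↦ g(a₂ ⊗ b₁) a₁ ⊗ b₂` -/
def ρg : T2 A →ₗ[ℂ] T2 A := (h12 (g G) ∘ₗ G.φ2).lTensor A ∘ₗ G.φ1

lemma op23_comp (f f' : T2 A →ₗ[ℂ] T2 A) : op23 (f ∘ₗ f') = op23 f ∘ₗ op23 f' := by
  simp [op23, LinearMap.lTensor_comp]
lemma op12_comp (f f' : T2 A →ₗ[ℂ] T2 A) : op12 (f ∘ₗ f') = op12 f ∘ₗ op12 f' := by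
  ext x; simp [op12, LinearMap.rTensor_comp]
lemma op23_id : op23 (LinearMap.id : T2 A →ₗ[ℂ] T2 A) = LinearMap.id := by
  simp [op23]
lemma op12_id : op12 (LinearMap.id : T2 A →ₗ[ℂ] T2 A) = LinearMap.id := by
  ext x; simp [op12]

lemma ex_op12 (f : T2 A →ₗ[ℂ] T2 A) (Z : T2 A →ₗ[ℂ] T3 A) :
    ex (op12 f ∘ₗ Z) = op12_4 f ∘ₗ ex Z := by
  ext a b c
  simp only [ex, op12, op12_4, AlgebraTensorModule.curry_apply, curry_apply, restrictScalars_self,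
    LinearMap.comp_apply, LinearEquiv.coe_coe, assoc_symm_tmul, rTensor_tmul]
  generalize Z (a ⊗ₜ b) = t
  induction t using TensorProduct.induction_on with
  | zero => simp
  | add x y hx hy => simp only [map_add, add_tmul, hx, hy]
  | tmul x s =>
    induction s using TensorProduct.induction_on with
    | zero => simp
    | add x y hx hy => simp only [map_add, tmul_add, add_tmul, hx, hy]
    | tmul y z =>
      simp
      generalize f (x ⊗ₜ y) = t
      induction t using TensorProduct.induction_on with
      | zero => simp
      | add x y hx hy => simp only [map_add, add_tmul, hx, hy]
      | tmul x s => simp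

lemma ex_op23 (f : T2 A →ₗ[ℂ] T2 A) (Z : T2 A →ₗ[ℂ] T3 A) :
    ex (op23 f ∘ₗ Z) = op23_4 f ∘ₗ ex Z := by
  ext a b c
  simp only [ex, op12, op23, op23_4, AlgebraTensorModule.curry_apply, curry_apply,
    restrictScalars_self,
    LinearMap.comp_apply, LinearEquiv.coe_coe, assoc_symm_tmul, rTensor_tmul]
  generalize Z (a ⊗ₜ b) = t
  induction t using TensorProduct.induction_on with
  | zero => simp
  | add x y hx hy => simp only [map_add, add_tmul, hx, hy]
  | tmul x s =>
    induction s using TensorProduct.induction_on with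
    | zero => simp
    | add x y hx hy => simp only [map_add, tmul_add, add_tmul, hx, hy]
    | tmul y z => simp

lemma h34_op12 (h : T2 A →ₗ[ℂ] ℂ) (f : T2 A →ₗ[ℂ] T2 A) :
    (h23 h).lTensor A ∘ₗ op12_4 f = f ∘ₗ (h23 h).lTensor A := by
  ext a b c d
  simp [h23, op12_4]
  generalize f (a ⊗ₜ b) = t
  induction t using TensorProduct.induction_on with
  | zero => simp
  | add x y hx hy => simp only [map_add, add_tmul, smul_add, hx, hy]
  | tmul x s => simp

lemma exφ1' : ex G.φ1 = (TensorProduct.assoc ℂ A A (T2 A)).toLinearMap ∘ₗ G.φ.rTensor (T2 A) := by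
  ext a b c
  simp [ex, BQG.φ1]
  generalize G.φ a = s
  induction s using TensorProduct.induction_on with
  | zero => simp
  | add x y hx hy => simp only [map_add, add_tmul, hx, hy]
  | tmul x y => simp

lemma φφ : (TensorProduct.assoc ℂ A A (T2 A)).toLinearMap ∘ₗ G.φ.rTensor (T2 A) ∘ₗ G.φ.lTensor A
    = G.φ2.lTensor A ∘ₗ G.φ1 := by
  ext a b
  simp [BQG.φ1, BQG.φ2]
  generalize G.φ a = s
  induction s using TensorProduct.induction_on with
  | zero => simp
  | add x y hx hy => simp only [map_add, add_tmul, hx, hy]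
  | tmul x y => simp

lemma exφ1 : ex G.φ1 ∘ₗ G.φ2 = G.φ2.lTensor A ∘ₗ G.φ1 := by
  rw [exφ1', ← φφ]; rfl

lemma φ1_op12 (f : T2 A →ₗ[ℂ] T2 A) : G.φ1.lTensor A ∘ₗ op12 f = ex (G.φ2 ∘ₗ f) := by
  ext a b c
  simp [ex, op12, BQG.φ1, BQG.φ2]
  generalize f (a ⊗ₜ b) = t
  induction t using TensorProduct.induction_on with
  | zero => simp
  | add x y hx hy => simp only [map_add, add_tmul, hx, hy]
  | tmul x s => simp

lemma e1φ : e1 G ∘ₗ G.φ = LinearMap.id := G.counit_left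
lemma e2φ : e2 G ∘ₗ G.φ = LinearMap.id := G.counit_right

lemma ε3l_φ1 : G.ε3l ∘ₗ G.φ1 = LinearMap.id := by
  have h : G.ε3l ∘ₗ G.φ1 = (e1 G ∘ₗ G.φ).rTensor A := by
    ext a b
    simp [BQG.ε3l, BQG.φ1, e1]
    generalize G.φ a = t
    induction t using TensorProduct.induction_on with
    | zero => simp
    | add x y hx hy => simp only [map_add, add_tmul, hx, hy]
    | tmul x s => simp [smul_tmul']
  rw [h, e1φ]; simp

lemma e1_φ1 : (e1 G).lTensor A ∘ₗ G.φ1 = LinearMap.id := by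
  have h : (e1 G).lTensor A ∘ₗ G.φ1 = (e2 G ∘ₗ G.φ).rTensor A := by
    ext a b
    simp [BQG.φ1, e1, e2]
    generalize G.φ a = t
    induction t using TensorProduct.induction_on with
    | zero => simp
    | add x y hx hy => simp only [map_add, add_tmul, hx, hy]
    | tmul x s => simp [smul_tmul']
  rw [h, e2φ]; simp

lemma ε3r_φ2 : G.ε3r ∘ₗ G.φ2 = LinearMap.id := by
  have : G.ε3r ∘ₗ G.φ2 = (e2 G ∘ₗ G.φ).lTensor A := by
    simp only [BQG.ε3r, BQG.φ2, e2, LinearMap.lTensor_comp]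
  rw [this, e2φ]; simp

lemma ε3r_op23 (f : T2 A →ₗ[ℂ] T2 A) : G.ε3r ∘ₗ op23 f = (e2 G ∘ₗ f).lTensor A := by
  simp only [BQG.ε3r, op23, e2, LinearMap.lTensor_comp]

lemma ε3r_op12 (f : T2 A →ₗ[ℂ] T2 A) : G.ε3r ∘ₗ op12 f = f ∘ₗ G.ε3r := by
  ext a b c
  simp [op12, BQG.ε3r]
  generalize f (a ⊗ₜ b) = t
  induction t using TensorProduct.induction_on with
  | zero => simp
  | add x y hx hy => simp only [map_add, add_tmul, smul_add, hx, hy]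
  | tmul x s => simp

lemma ε4_op12 (f : T2 A →ₗ[ℂ] T2 A) :
    G.ε3r.lTensor A ∘ₗ op12_4 f = op12 f ∘ₗ G.ε3r.lTensor A := by
  ext a b c d
  simp [op12, op12_4, BQG.ε3r]
  generalize f (a ⊗ₜ b) = t
  induction t using TensorProduct.induction_on with
  | zero => simp
  | add x y hx hy => simp only [map_add, add_tmul, smul_add, hx, hy]
  | tmul x s => simp

lemma ε3r_φ1 : G.ε3r ∘ₗ G.φ1 = G.φ ∘ₗ e2 G := by
  ext a b
  simp [BQG.φ1, BQG.ε3r, e2]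
  generalize G.φ a = t
  induction t using TensorProduct.induction_on with
  | zero => simp
  | add x y hx hy => simp only [map_add, add_tmul, smul_add, hx, hy]
  | tmul x s => simp

lemma ε3l_lTensor (f : T2 A →ₗ[ℂ] T2 A) : G.ε3l ∘ₗ f.lTensor A = f ∘ₗ G.ε3l := by
  ext a b c
  simp [BQG.ε3l]

lemma ε14_lTensor (f : T2 A →ₗ[ℂ] T3 A) : ε14 G ∘ₗ f.lTensor A = f ∘ₗ G.ε3l := by
  ext a b c
  simp [BQG.ε3l, ε14]

lemma ε3l_op12 (f : T2 A →ₗ[ℂ] T2 A) : G.ε3l ∘ₗ op12 f = j12 (e1 G ∘ₗ f) := by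
  ext a b c
  simp [op12, BQG.ε3l, j12, e1]
  generalize f (a ⊗ₜ b) = t
  induction t using TensorProduct.induction_on with
  | zero => simp
  | add x y hx hy => simp only [map_add, add_tmul, smul_add, hx, hy]
  | tmul x s => simp [smul_tmul']

lemma ε14_op12 (f : T2 A →ₗ[ℂ] T2 A) :
    ε14 G ∘ₗ op12_4 f ∘ₗ G.φ1.lTensor A = op12 (G.ε3l ∘ₗ op12 f ∘ₗ G.φ2) := by
  ext a b c
  simp [op12, BQG.ε3l, ε14, op12_4, BQG.φ1, BQG.φ2]
  generalize G.φ b = t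
  induction t using TensorProduct.induction_on with
  | zero => simp
  | add x y hx hy => simp only [map_add, tmul_add, add_tmul, smul_add, hx, hy]
  | tmul x y =>
    simp
    generalize f (a ⊗ₜ x) = t
    induction t using TensorProduct.induction_on with
    | zero => simp
    | add x y hx hy => simp only [map_add, add_tmul, smul_add, hx, hy]
    | tmul x s => simp [smul_tmul']

/-- first half of the axiom -/
lemma H1 : op12 G.σ ∘ₗ G.φ2 ∘ₗ G.σ' = op23 (ρ G) ∘ₗ op23 G.σ' ∘ₗ G.φ1 := by
  have h := congrArg (fun X => G.ε3r.lTensor A ∘ₗ X) G.mixed_coassoc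
  change G.ε3r.lTensor A ∘ₗ (op12_4 G.σ ∘ₗ G.φ1.lTensor A ∘ₗ op12 G.σ' ∘ₗ G.φ2) =
    G.ε3r.lTensor A ∘ₗ ((op23 G.σ).lTensor A ∘ₗ G.φ1.lTensor A ∘ₗ op23 G.σ' ∘ₗ G.φ1) at h
  have hL : G.ε3r.lTensor A ∘ₗ (op12_4 G.σ ∘ₗ G.φ1.lTensor A ∘ₗ op12 G.σ' ∘ₗ G.φ2) =
      op12 G.σ ∘ₗ G.φ2 ∘ₗ G.σ' := by
    calc _ = (G.ε3r.lTensor A ∘ₗ op12_4 G.σ) ∘ₗ G.φ1.lTensor A ∘ₗ op12 G.σ' ∘ₗ G.φ2 := rfl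
      _ = op12 G.σ ∘ₗ (G.ε3r.lTensor A ∘ₗ G.φ1.lTensor A) ∘ₗ op12 G.σ' ∘ₗ G.φ2 := by
        rw [ε4_op12]; rfl
      _ = op12 G.σ ∘ₗ G.φ2 ∘ₗ (G.ε3r ∘ₗ op12 G.σ') ∘ₗ G.φ2 := by
        rw [← LinearMap.lTensor_comp, ε3r_φ1, LinearMap.lTensor_comp]; rfl
      _ = op12 G.σ ∘ₗ G.φ2 ∘ₗ G.σ' ∘ₗ (G.ε3r ∘ₗ G.φ2) := by rw [ε3r_op12]; rfl
      _ = _ := by rw [ε3r_φ2]; rfl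
  rw [hL] at h
  rw [h]
  change _ = (G.ε3r ∘ₗ op23 G.σ ∘ₗ G.φ1).lTensor A ∘ₗ _
  rw [LinearMap.lTensor_comp, LinearMap.lTensor_comp]
  rfl

lemma H2 : op12 (ρl G) ∘ₗ op12 G.σ' ∘ₗ G.φ2 = op23 G.σ ∘ₗ G.φ1 ∘ₗ G.σ' := by
  have h := congrArg (fun X => ε14 G ∘ₗ X) G.mixed_coassoc
  change ε14 G ∘ₗ (op12_4 G.σ ∘ₗ G.φ1.lTensor A ∘ₗ op12 G.σ' ∘ₗ G.φ2) =
    ε14 G ∘ₗ ((op23 G.σ).lTensor A ∘ₗ G.φ1.lTensor A ∘ₗ op23 G.σ' ∘ₗ G.φ1) at h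
  have hL : ε14 G ∘ₗ (op12_4 G.σ ∘ₗ G.φ1.lTensor A ∘ₗ op12 G.σ' ∘ₗ G.φ2) =
      op12 (ρl G) ∘ₗ op12 G.σ' ∘ₗ G.φ2 := by
    rw [ρl, ← ε14_op12]; rfl
  rw [hL] at h
  rw [h]
  calc _ = (ε14 G ∘ₗ ((op23 G.σ ∘ₗ G.φ1 ∘ₗ G.σ').lTensor A)) ∘ₗ G.φ1 := by
        rw [LinearMap.lTensor_comp, LinearMap.lTensor_comp]; rfl
    _ = (op23 G.σ ∘ₗ G.φ1 ∘ₗ G.σ') ∘ₗ (G.ε3l ∘ₗ G.φ1) := by rw [ε14_lTensor]; rfl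
    _ = _ := by rw [ε3l_φ1]; rfl

lemma ρl_eq : ρl G = ρ G := by
  have h := congrArg (fun X => (G.ε3l ∘ₗ X) ∘ₗ G.σ) (H1 G)
  have h1 : (G.ε3l ∘ₗ (op12 G.σ ∘ₗ G.φ2 ∘ₗ G.σ')) ∘ₗ G.σ = ρl G := by
    calc _ = ρl G ∘ₗ (G.σ' ∘ₗ G.σ) := rfl
      _ = _ := by rw [G.comp_σ]; rfl
  have h2 : (G.ε3l ∘ₗ (op23 (ρ G) ∘ₗ op23 G.σ' ∘ₗ G.φ1)) ∘ₗ G.σ = ρ G := by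
    calc _ = (G.ε3l ∘ₗ (ρ G ∘ₗ G.σ').lTensor A) ∘ₗ G.φ1 ∘ₗ G.σ := by
          rw [LinearMap.lTensor_comp]; rfl
      _ = ρ G ∘ₗ G.σ' ∘ₗ (G.ε3l ∘ₗ G.φ1) ∘ₗ G.σ := by rw [ε3l_lTensor]; rfl
      _ = ρ G ∘ₗ (G.σ' ∘ₗ G.σ) := by rw [ε3l_φ1]; rfl
      _ = _ := by rw [G.comp_σ]; rfl
  rw [← h1, ← h2]; exact h


lemma left_colin (X : T2 A →ₗ[ℂ] A) :
    G.φ1 ∘ₗ X.lTensor A ∘ₗ G.φ1 = op23 (X.lTensor A ∘ₗ G.φ1) ∘ₗ G.φ1 := by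
  ext a b
  have h := LinearMap.congr_fun G.coassoc a
  let F : A ⊗[ℂ] (A ⊗[ℂ] A) →ₗ[ℂ] T3 A :=
    ((X ∘ₗ (TensorProduct.mk ℂ A A).flip b).lTensor A).lTensor A
  have h1 : ∀ t : T2 A, F (TensorProduct.assoc ℂ A A A (G.φ.rTensor A t)) =
    TensorProduct.assoc ℂ A A A ((rTensor A G.φ) ((lTensor A X) (TensorProduct.assoc ℂ A A A (t ⊗ₜ[ℂ] b)))) := by
    intro t
    induction t using TensorProduct.induction_on with
    | zero => simp
    | add x y hx hy => simp only [map_add, add_tmul, hx, hy]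
    | tmul x y =>
      simp
      generalize G.φ x = t
      induction t using TensorProduct.induction_on with
      | zero => simp
      | add x y hx hy => simp only [map_add, add_tmul, hx, hy]
      | tmul x y => simp [F]
  have h2 : ∀ t : T2 A, F (G.φ.lTensor A t) = ((X.lTensor A ∘ₗ G.φ1).lTensor A)
      (TensorProduct.assoc ℂ A A A (t ⊗ₜ[ℂ] b)) := by
    intro t
    induction t using TensorProduct.induction_on with
    | zero => simp
    | add x y hx hy => simp only [map_add, add_tmul, hx, hy]
    | tmul x y =>
      simp [F, BQG.φ1]
      generalize G.φ y = t
      induction t using TensorProduct.induction_on with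
      | zero => simp
      | add x y hx hy => simp only [map_add, add_tmul, tmul_add, hx, hy]
      | tmul x y => simp
  have h' := congrArg F h
  exact (h1 _).symm.trans (h'.trans (h2 _))

lemma right_colin (j : T2 A →ₗ[ℂ] A) :
    G.φ2 ∘ₗ j12 j ∘ₗ G.φ2 = op12 (j12 j ∘ₗ G.φ2) ∘ₗ G.φ2 := by
  ext a b
  have h := LinearMap.congr_fun G.coassoc b
  let F : A ⊗[ℂ] (A ⊗[ℂ] A) →ₗ[ℂ] T3 A :=
    (j ∘ₗ TensorProduct.mk ℂ A A a).rTensor (T2 A)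
  have h1 : ∀ t : T2 A, F (G.φ.lTensor A t) = G.φ2 (j12 j (a ⊗ₜ t)) := by
    intro t
    induction t using TensorProduct.induction_on with
    | zero => simp
    | add x y hx hy => simp only [map_add, tmul_add, hx, hy]
    | tmul x y => simp [F, j12, BQG.φ2]
  have h2 : ∀ t : T2 A, F (TensorProduct.assoc ℂ A A A (G.φ.rTensor A t)) =
      op12 (j12 j ∘ₗ G.φ2) (a ⊗ₜ t) := by
    intro t
    induction t using TensorProduct.induction_on with
    | zero => simp
    | add x y hx hy => simp only [map_add, tmul_add, hx, hy]
    | tmul x y =>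
      simp [op12, BQG.φ2]
      generalize G.φ x = t
      induction t using TensorProduct.induction_on with
      | zero => simp
      | add x y hx hy => simp only [map_add, add_tmul, tmul_add, hx, hy]
      | tmul x y => simp [F, j12]
  have h' := congrArg F h
  exact (h1 _).symm.trans (h'.symm.trans (h2 _))

lemma h12_ex (h : T2 A →ₗ[ℂ] ℂ) (Y : T2 A →ₗ[ℂ] T3 A) :
    (h12 h).lTensor A ∘ₗ ex Y = j12 (h23 h ∘ₗ Y) := by
  ext a b c
  simp only [ex, h12, h23, j12, AlgebraTensorModule.curry_apply, curry_apply,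
    restrictScalars_self,
    LinearMap.comp_apply, LinearEquiv.coe_coe, assoc_symm_tmul, rTensor_tmul]
  generalize Y (a ⊗ₜ b) = t
  induction t using TensorProduct.induction_on with
  | zero => simp
  | add x y hx hy => simp only [map_add, add_tmul, hx, hy]
  | tmul x s =>
    induction s using TensorProduct.induction_on with
    | zero => simp
    | add x y hx hy => simp only [map_add, tmul_add, add_tmul, hx, hy]
    | tmul y z => simp [smul_tmul']

lemma ρ_l : ρ G = (e2 G ∘ₗ G.σ).lTensor A ∘ₗ G.φ1 := by
  rw [← ε3r_op23]; rfl

lemma ρ_r : ρ G = j12 (e1 G ∘ₗ G.σ) ∘ₗ G.φ2 := by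
  rw [← ρl_eq, ← ε3l_op12]; rfl

lemma ρg_r : ρg G = j12 (h23 (g G) ∘ₗ G.φ1) ∘ₗ G.φ2 := by
  rw [← h12_ex, LinearMap.comp_assoc, exφ1, ρg, LinearMap.lTensor_comp]; rfl

lemma ρ_left : G.φ1 ∘ₗ ρ G = op23 (ρ G) ∘ₗ G.φ1 := by
  rw [ρ_l]; exact left_colin G _
lemma ρ_right : G.φ2 ∘ₗ ρ G = op12 (ρ G) ∘ₗ G.φ2 := by
  rw [ρ_r]; exact right_colin G _
lemma ρg_right : G.φ2 ∘ₗ ρg G = op12 (ρg G) ∘ₗ G.φ2 := by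
  rw [ρg_r]; exact right_colin G _

lemma e2_j12 (j : T2 A →ₗ[ℂ] A) : e2 G ∘ₗ j12 j = j ∘ₗ G.ε3r := by
  ext a b c
  simp [e2, j12, BQG.ε3r]

lemma e2_j12_φ2 (j : T2 A →ₗ[ℂ] A) : e2 G ∘ₗ j12 j ∘ₗ G.φ2 = j := by
  rw [← LinearMap.comp_assoc, e2_j12, LinearMap.comp_assoc, ε3r_φ2]; rfl

lemma e1_lT (X : T2 A →ₗ[ℂ] A) : e1 G ∘ₗ X.lTensor A = X ∘ₗ G.ε3l := by
  ext a b c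
  simp [e1, BQG.ε3l]

lemma e1_lT_φ1 (X : T2 A →ₗ[ℂ] A) : e1 G ∘ₗ X.lTensor A ∘ₗ G.φ1 = X := by
  rw [← LinearMap.comp_assoc, e1_lT, LinearMap.comp_assoc, ε3l_φ1]; rfl

lemma strip (X : T2 A →ₗ[ℂ] A) (hX : mA ∘ₗ X.lTensor A ∘ₗ G.φ1 = mA) : X = e1 G := by
  let T : (T2 A →ₗ[ℂ] A) → (T2 A →ₗ[ℂ] A) := fun Z =>
    mA ∘ₗ G.κ.rTensor A ∘ₗ Z.lTensor A ∘ₗ G.φ1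
  -- `κ(a₁)(a₂ X(a₃ ⊗ b)) = X(a ⊗ b)`
  have key : ∀ (Z : T2 A →ₗ[ℂ] A), T (mA ∘ₗ Z.lTensor A ∘ₗ G.φ1) = Z := by
    intro Z
    have e : (mA ∘ₗ Z.lTensor A ∘ₗ G.φ1).lTensor A ∘ₗ G.φ1
        = mA.lTensor A ∘ₗ G.φ1 ∘ₗ Z.lTensor A ∘ₗ G.φ1 := by
      rw [left_colin, LinearMap.lTensor_comp]; rfl
    have e' : mA ∘ₗ G.κ.rTensor A ∘ₗ mA.lTensor A ∘ₗ G.φ1 = e1 G := by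
      ext a b
      have h := LinearMap.congr_fun G.antipode_left a
      have h1 : ∀ t : T2 A, mA (G.κ.rTensor A (mA.lTensor A
          (TensorProduct.assoc ℂ A A A (t ⊗ₜ b)))) = mA (G.κ.rTensor A t) * b := by
        intro t
        induction t using TensorProduct.induction_on with
        | zero => simp
        | add x y hx hy => simp only [map_add, add_tmul, add_mul, hx, hy]
        | tmul x y => simp [mA, mul_assoc]
      refine (h1 _).trans ?_
      have h2 : mA (G.κ.rTensor A (G.φ a)) = algebraMap ℂ A (G.ε a) := h
      rw [h2]
      simp [e1, Algebra.smul_def]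
    calc T (mA ∘ₗ Z.lTensor A ∘ₗ G.φ1)
        = mA ∘ₗ G.κ.rTensor A ∘ₗ ((mA ∘ₗ Z.lTensor A ∘ₗ G.φ1).lTensor A ∘ₗ G.φ1) := rfl
      _ = (mA ∘ₗ G.κ.rTensor A ∘ₗ mA.lTensor A ∘ₗ G.φ1) ∘ₗ Z.lTensor A ∘ₗ G.φ1 := by
        rw [e]; rfl
      _ = Z := by rw [e', e1_lT_φ1]
  have h0 : mA ∘ₗ (e1 G).lTensor A ∘ₗ G.φ1 = mA := by rw [e1_φ1]; rfl
  rw [← key X, hX, ← key (e1 G), h0]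

lemma e2_mm : e2 G ∘ₗ mm = mA ∘ₗ (h23 (g G)).lTensor A := by
  ext a b c d
  simp [e2, mm, m12, mA, h23, g]

lemma E2_s6 : h23 (g G) ∘ₗ op12 G.σ ∘ₗ G.φ2 = e1 G := by
  apply strip
  have h := congrArg (fun X => e2 G ∘ₗ X) G.comul_mul
  rw [φφ] at h
  have h1 : e2 G ∘ₗ (G.φ ∘ₗ mA) = mA := by rw [← LinearMap.comp_assoc, e2φ]; rfl
  refine Eq.trans ?_ (h.symm.trans h1)
  change _ = (e2 G ∘ₗ mm) ∘ₗ op23_4 G.σ ∘ₗ G.φ2.lTensor A ∘ₗ G.φ1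
  rw [e2_mm, LinearMap.lTensor_comp, LinearMap.lTensor_comp]
  rfl

lemma h_ε3l (h : T2 A →ₗ[ℂ] ℂ) : h ∘ₗ G.ε3l = G.ε ∘ₗ h23 h := by
  ext a b c
  simp [h23, BQG.ε3l, mul_comm]

lemma g_ρ : g G ∘ₗ ρ G = G.ε ∘ₗ e1 G := by
  rw [← E2_s6, ← ρl_eq, ρl, ← LinearMap.comp_assoc, h_ε3l]; rfl

lemma h12_op12 (h : T2 A →ₗ[ℂ] ℂ) (f : T2 A →ₗ[ℂ] T2 A) : h12 h ∘ₗ op12 f = h12 (h ∘ₗ f) := by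
  ext a b c
  simp [h12, op12]

lemma h12_e1 : h12 (G.ε ∘ₗ e1 G) ∘ₗ G.φ2 = e1 G := by
  have : h12 (G.ε ∘ₗ e1 G) = e1 G ∘ₗ (e1 G).lTensor A := by
    ext a b c
    simp [h12, e1, mul_smul]
    exact smul_comm _ _ _
  have h2 : (e1 G).lTensor A ∘ₗ G.φ2 = LinearMap.id := by
    rw [BQG.φ2, ← LinearMap.lTensor_comp, e1φ]; simp
  rw [this, LinearMap.comp_assoc, h2]; rfl

lemma ρg_ρ : ρg G ∘ₗ ρ G = LinearMap.id := by
  calc ρg G ∘ₗ ρ G = (h12 (g G) ∘ₗ G.φ2).lTensor A ∘ₗ (G.φ1 ∘ₗ ρ G) := rfl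
    _ = (h12 (g G) ∘ₗ G.φ2 ∘ₗ ρ G).lTensor A ∘ₗ G.φ1 := by
      rw [ρ_left, op23, ← LinearMap.comp_assoc, ← LinearMap.lTensor_comp]; rfl
    _ = _ := by
      rw [ρ_right, ← LinearMap.comp_assoc, h12_op12, g_ρ, h12_e1, e1_φ1]

lemma H1' : op23 G.σ' ∘ₗ G.φ1 ∘ₗ G.σ = op23 (ρg G) ∘ₗ op12 G.σ ∘ₗ G.φ2 := by
  have h : op23 (ρg G) ∘ₗ (op12 G.σ ∘ₗ G.φ2 ∘ₗ G.σ') ∘ₗ G.σ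
      = op23 (ρg G) ∘ₗ op12 G.σ ∘ₗ G.φ2 := by
    calc _ = op23 (ρg G) ∘ₗ op12 G.σ ∘ₗ G.φ2 ∘ₗ (G.σ' ∘ₗ G.σ) := rfl
      _ = _ := by rw [G.comp_σ]; rfl
  rw [← h, H1]
  calc _ = LinearMap.id ∘ₗ (op23 G.σ' ∘ₗ G.φ1 ∘ₗ G.σ) := rfl
    _ = (op23 (ρg G) ∘ₗ op23 (ρ G)) ∘ₗ (op23 G.σ' ∘ₗ G.φ1 ∘ₗ G.σ) := by
      rw [← op23_comp, ρg_ρ, op23_id]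
    _ = _ := rfl

lemma H2' : G.φ2 ∘ₗ G.σ = op12 (G.σ ∘ₗ ρg G) ∘ₗ op23 G.σ ∘ₗ G.φ1 := by
  have h : op12 (G.σ ∘ₗ ρg G) ∘ₗ (op23 G.σ ∘ₗ G.φ1 ∘ₗ G.σ') ∘ₗ G.σ
      = op12 (G.σ ∘ₗ ρg G) ∘ₗ op23 G.σ ∘ₗ G.φ1 := by
    calc _ = op12 (G.σ ∘ₗ ρg G) ∘ₗ op23 G.σ ∘ₗ G.φ1 ∘ₗ (G.σ' ∘ₗ G.σ) := rfl
      _ = _ := by rw [G.comp_σ]; rfl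
  rw [← h, ← H2, ρl_eq]
  have h3 : (G.σ ∘ₗ ρg G) ∘ₗ ρ G ∘ₗ G.σ' = LinearMap.id := by
    calc _ = G.σ ∘ₗ (ρg G ∘ₗ ρ G) ∘ₗ G.σ' := rfl
      _ = _ := by rw [ρg_ρ]; exact G.σ_comp
  calc _ = LinearMap.id ∘ₗ (G.φ2 ∘ₗ G.σ) := rfl
    _ = (op12 (G.σ ∘ₗ ρg G) ∘ₗ op12 (ρ G) ∘ₗ op12 G.σ') ∘ₗ (G.φ2 ∘ₗ G.σ) := by
      rw [← op12_comp, ← op12_comp, h3, op12_id]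
    _ = _ := rfl

lemma τ_eq : G.τ = G.σ ∘ₗ ρg G := by
  calc G.τ = G.ε3r ∘ₗ (op23 G.σ' ∘ₗ G.φ1 ∘ₗ G.σ) := rfl
    _ = (G.ε3r ∘ₗ op23 (ρg G)) ∘ₗ op12 G.σ ∘ₗ G.φ2 := by rw [H1']; rfl
    _ = (h23 (g G)).lTensor A ∘ₗ (G.φ1.lTensor A ∘ₗ op12 G.σ) ∘ₗ G.φ2 := by
      rw [ε3r_op23, ρg_r, e2_j12_φ2, LinearMap.lTensor_comp]; rfl
    _ = ((h23 (g G)).lTensor A ∘ₗ op12_4 (G.σ ∘ₗ ρg G)) ∘ₗ op23_4 G.σ ∘ₗ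
          (ex G.φ1 ∘ₗ G.φ2) := by
      rw [φ1_op12, H2', ex_op12, ex_op23]; rfl
    _ = (G.σ ∘ₗ ρg G) ∘ₗ ((h23 (g G) ∘ₗ op12 G.σ ∘ₗ G.φ2).lTensor A ∘ₗ G.φ1) := by
      rw [h34_op12, exφ1, LinearMap.lTensor_comp, LinearMap.lTensor_comp]; rfl
    _ = _ := by rw [E2_s6, e1_φ1]; rfl

lemma τ_ρ : G.τ ∘ₗ ρ G = G.σ := by
  rw [τ_eq, LinearMap.comp_assoc, ρg_ρ]; rfl

lemma εε_comm : G.ε ∘ₗ e1 G = G.ε ∘ₗ e2 G := by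
  ext a b
  simp [e1, e2, mul_comm]

lemma e1_τ : e1 G ∘ₗ G.τ = e2 G := by
  calc e1 G ∘ₗ G.τ = e1 G ∘ₗ (G.ε3r ∘ₗ op23 G.σ') ∘ₗ G.φ1 ∘ₗ G.σ := rfl
    _ = (e1 G ∘ₗ (e2 G ∘ₗ G.σ').lTensor A ∘ₗ G.φ1) ∘ₗ G.σ := by rw [ε3r_op23]; rfl
    _ = e2 G ∘ₗ (G.σ' ∘ₗ G.σ) := by rw [e1_lT_φ1]; rfl
    _ = _ := by rw [G.comp_σ]; rfl

lemma e2_ρ : e2 G ∘ₗ ρ G = e1 G ∘ₗ G.σ := by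
  rw [ρ_r, e2_j12_φ2]

lemma e2_Λ : e2 G ∘ₗ ρ G ∘ₗ ρg G = e2 G := by
  calc _ = (e2 G ∘ₗ ρ G) ∘ₗ ρg G := rfl
    _ = e1 G ∘ₗ (G.σ ∘ₗ ρg G) := by rw [e2_ρ]; rfl
    _ = _ := by rw [← τ_eq, e1_τ]

lemma e2_op12 (f : T2 A →ₗ[ℂ] T2 A) : j12 (e2 G) ∘ₗ op12 f = j12 (e2 G ∘ₗ f) := by
  ext a b c
  simp [j12, op12]

lemma e2_φ2 : j12 (e2 G) ∘ₗ G.φ2 = LinearMap.id := by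
  have h : j12 (e2 G) = (e1 G).lTensor A := by
    ext a b c
    simp [j12, e1, e2, smul_tmul']
  rw [h, BQG.φ2, ← LinearMap.lTensor_comp, e1φ]; simp

lemma ρ_ρg : ρ G ∘ₗ ρg G = LinearMap.id := by
  have h : G.φ2 ∘ₗ (ρ G ∘ₗ ρg G) = op12 (ρ G ∘ₗ ρg G) ∘ₗ G.φ2 := by
    rw [← LinearMap.comp_assoc, ρ_right, LinearMap.comp_assoc, ρg_right, op12_comp]; rfl
  calc _ = (j12 (e2 G) ∘ₗ G.φ2) ∘ₗ (ρ G ∘ₗ ρg G) := by rw [e2_φ2]; rfl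
    _ = (j12 (e2 G) ∘ₗ op12 (ρ G ∘ₗ ρg G)) ∘ₗ G.φ2 := by rw [LinearMap.comp_assoc, h]; rfl
    _ = _ := by rw [e2_op12, e2_Λ, e2_φ2]

lemma τ_bij : Function.Bijective G.τ := by
  have h1 : (ρ G ∘ₗ G.σ') ∘ₗ G.τ = LinearMap.id := by
    calc _ = ρ G ∘ₗ (G.σ' ∘ₗ G.σ) ∘ₗ ρg G := by rw [τ_eq]; rfl
      _ = _ := by rw [G.comp_σ]; exact ρ_ρg G
  have h2 : G.τ ∘ₗ (ρ G ∘ₗ G.σ') = LinearMap.id := by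
    rw [← LinearMap.comp_assoc, τ_ρ, G.σ_comp]
  exact ⟨Function.LeftInverse.injective (g := ρ G ∘ₗ G.σ') (LinearMap.congr_fun h1),
    Function.RightInverse.surjective (g := ρ G ∘ₗ G.σ') (LinearMap.congr_fun h2)⟩

end BQGProof

/-- The secondary braiding `τ` is bijective, with inverse characterized by
`τ⁻¹σ = (id²⊗ε)(id⊗σ)(φ⊗id) = (ε⊗id²)(σ⊗id)(id⊗φ)`, i.e.
`σ = τ ∘ (id²⊗ε)(id⊗σ)(φ⊗id)` and `σ = τ ∘ (ε⊗id²)(σ⊗id)(id⊗φ)`. -/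
theorem bqg_tau_bijective {A : Type*} [Ring A] [Algebra ℂ A] (G : BQG A) :
    Function.Bijective G.τ ∧
    G.τ ∘ₗ (G.ε3r ∘ₗ op23 G.σ ∘ₗ G.φ1) = G.σ ∧
    G.τ ∘ₗ (G.ε3l ∘ₗ op12 G.σ ∘ₗ G.φ2) = G.σ := by
  refine ⟨BQGProof.τ_bij G, BQGProof.τ_ρ G, ?_⟩
  change G.τ ∘ₗ BQGProof.ρl G = G.σ
  rw [BQGProof.ρl_eq, BQGProof.τ_ρ]
end
end

section
/- In a braided quantum group, the maps στ⁻¹ and σ⁻¹τ (where τ is the secondary braiding) satisfy the commutation relations (στ⁻¹⊗id)(id⊗στ⁻¹) = (id⊗στ⁻¹)(στ⁻¹⊗id), (στ⁻¹⊗id)(id⊗σ⁻¹τ) = (id⊗σ⁻¹τ)(στ⁻¹⊗id), and (σ⁻¹τ⊗id)(id⊗σ⁻¹τ) = (id⊗σ⁻¹τ)(σ⁻¹τ⊗id). -/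
open TensorProduct LinearMap

noncomputable section

variable (A : Type*) [Ring A] [Algebra ℂ A]

variable {A}

namespace BQGaux

section
variable {A : Type*} [Ring A] [Algebra ℂ A]
variable {C D B : Type*} [AddCommMonoid C] [Module ℂ C] [AddCommMonoid D] [Module ℂ D]
  [AddCommMonoid B] [Module ℂ B]

/-- `id_A ⊗ f`. -/
abbrev L (f : C →ₗ[ℂ] D) : A ⊗[ℂ] C →ₗ[ℂ] A ⊗[ℂ] D := f.lTensor A

theorem Lc {f g : C →ₗ[ℂ] D} (h : ∀ y, f y = g y) (x : A ⊗[ℂ] C) : L f x = L g x := by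
  rw [LinearMap.ext h]

/-- `f ⊗ id_C` for `f : A² → A²`. -/
def F2 (f : T2 A →ₗ[ℂ] T2 A) : A ⊗[ℂ] (A ⊗[ℂ] C) →ₗ[ℂ] A ⊗[ℂ] (A ⊗[ℂ] C) :=
  (TensorProduct.assoc ℂ A A C).toLinearMap ∘ₗ f.rTensor C ∘ₗ
    (TensorProduct.assoc ℂ A A C).symm.toLinearMap

/-- `f ⊗ id_C` for `f : A → A²`. -/
def F1 (f : A →ₗ[ℂ] T2 A) : A ⊗[ℂ] C →ₗ[ℂ] A ⊗[ℂ] (A ⊗[ℂ] C) :=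
  (TensorProduct.assoc ℂ A A C).toLinearMap ∘ₗ f.rTensor C

/-- `f ⊗ id_C` for a functional `f`. -/
def F0 (f : A →ₗ[ℂ] ℂ) : A ⊗[ℂ] C →ₗ[ℂ] C :=
  (TensorProduct.lid ℂ C).toLinearMap ∘ₗ f.rTensor C

/-- `m ⊗ id_C`. -/
def M : A ⊗[ℂ] (A ⊗[ℂ] C) →ₗ[ℂ] A ⊗[ℂ] C :=
  (mA (A := A)).rTensor C ∘ₗ (TensorProduct.assoc ℂ A A C).symm.toLinearMap

/-- `f ⊗ id_C` for `f : A → A`. -/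
def K (f : A →ₗ[ℂ] A) : A ⊗[ℂ] C →ₗ[ℂ] A ⊗[ℂ] C := f.rTensor C

/-- The unit. -/
def U : C →ₗ[ℂ] A ⊗[ℂ] C := TensorProduct.mk ℂ A C 1

/-- Insertion of `c` in the last place. -/
def ins (c : C) : A →ₗ[ℂ] A ⊗[ℂ] C := (TensorProduct.mk ℂ A C).flip c

/-! naturality -/

theorem assoc_nat (g : C →ₗ[ℂ] D) (w : T2 A) (c : C) :
    L (L g) (TensorProduct.assoc ℂ A A C (w ⊗ₜ c)) = TensorProduct.assoc ℂ A A D (w ⊗ₜ g c) := by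
  induction w using TensorProduct.induction_on with
  | zero => simp
  | tmul x y => simp [L]
  | add x y hx hy => simp only [add_tmul, map_add, hx, hy]

theorem assoc_ins (w : T2 A) (c : C) :
    TensorProduct.assoc ℂ A A C (w ⊗ₜ c) = L (ins c) w := by
  induction w using TensorProduct.induction_on with
  | zero => simp
  | tmul x y => simp [L, ins]
  | add x y hx hy => simp only [add_tmul, map_add, hx, hy]

theorem F2_nat (f : T2 A →ₗ[ℂ] T2 A) (g : C →ₗ[ℂ] D) (x : A ⊗[ℂ] (A ⊗[ℂ] C)) :
    F2 f (L (L g) x) = L (L g) (F2 f x) := by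
  obtain ⟨x, rfl⟩ := (TensorProduct.assoc ℂ A A C).surjective x
  induction x using TensorProduct.induction_on with
  | zero => simp
  | tmul w c => rw [assoc_nat]; simp only [F2, LinearMap.comp_apply, LinearEquiv.coe_coe, LinearEquiv.symm_apply_apply, rTensor_tmul]; rw [assoc_nat]
  | add x y hx hy => simp only [map_add, hx, hy]

theorem F1_nat (f : A →ₗ[ℂ] T2 A) (g : C →ₗ[ℂ] D) (x : A ⊗[ℂ] C) :
    F1 f (L g x) = L (L g) (F1 f x) := by
  induction x using TensorProduct.induction_on with
  | zero => simp
  | tmul w c => simp only [F1, L, lTensor_tmul, LinearMap.comp_apply, LinearEquiv.coe_coe, rTensor_tmul]; rw [← assoc_nat]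
  | add x y hx hy => simp only [map_add, hx, hy]

theorem F0_nat (f : A →ₗ[ℂ] ℂ) (g : C →ₗ[ℂ] D) (x : A ⊗[ℂ] C) :
    F0 f (L g x) = g (F0 f x) := by
  induction x using TensorProduct.induction_on with
  | zero => simp
  | tmul w c => simp [F0, L]
  | add x y hx hy => simp only [map_add, hx, hy]

theorem K_nat (f : A →ₗ[ℂ] A) (g : C →ₗ[ℂ] D) (x : A ⊗[ℂ] C) :
    K f (L g x) = L g (K f x) := by
  induction x using TensorProduct.induction_on with
  | zero => simp
  | tmul w c => simp [K, L]
  | add x y hx hy => simp only [map_add, hx, hy]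

theorem M_nat (g : C →ₗ[ℂ] D) (x : A ⊗[ℂ] (A ⊗[ℂ] C)) :
    M (L (L g) x) = L g (M x) := by
  obtain ⟨x, rfl⟩ := (TensorProduct.assoc ℂ A A C).surjective x
  induction x using TensorProduct.induction_on with
  | zero => simp
  | tmul w c => rw [assoc_nat]; simp [M, L]
  | add x y hx hy => simp only [map_add, hx, hy]

theorem U_nat (g : C →ₗ[ℂ] D) (x : C) : (U (g x) : A ⊗[ℂ] D) = L g (U x) := by
  simp [U, L]

theorem M_U (x : A ⊗[ℂ] C) : M (U x) = x := by
  induction x using TensorProduct.induction_on with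
  | zero => simp
  | tmul w c => simp [U, M, mA]
  | add x y hx hy => simp only [map_add, hx, hy]

theorem M_LU (x : A ⊗[ℂ] C) : M (L U x) = x := by
  induction x using TensorProduct.induction_on with
  | zero => simp
  | tmul w c => simp [U, M, mA, L]
  | add x y hx hy => simp only [map_add, hx, hy]

theorem M_M (x : A ⊗[ℂ] (A ⊗[ℂ] (A ⊗[ℂ] C))) : M (L M x) = M (M x) := by
  have : (M ∘ₗ L M : A ⊗[ℂ] (A ⊗[ℂ] (A ⊗[ℂ] C)) →ₗ[ℂ] A ⊗[ℂ] C) = M ∘ₗ M := by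
    ext a b c d
    simp [M, mA, L, mul_assoc]
  exact LinearMap.congr_fun this x

/-! plain maps versus families -/

theorem F2_ins (f : T2 A →ₗ[ℂ] T2 A) (c : C) (x : T2 A) :
    F2 f (L (ins c) x) = L (ins c) (f x) := by
  rw [← assoc_ins]; simp [F2]; rw [assoc_ins]

theorem F1_ins (f : A →ₗ[ℂ] T2 A) (c : C) (x : A) :
    F1 f (ins c x) = L (ins c) (f x) := by
  rw [← assoc_ins]; simp [F1, ins]

theorem M_ins (c : C) (x : T2 A) : M (L (ins c) x) = ins c (mA x) := by
  rw [← assoc_ins]; simp [M, ins]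

theorem K_ins (f : A →ₗ[ℂ] A) (c : C) (x : A) : K f (ins c x) = ins c (f x) := by
  simp [K, ins]

theorem F2_comp (f g : T2 A →ₗ[ℂ] T2 A) (x : A ⊗[ℂ] (A ⊗[ℂ] C)) :
    F2 (f ∘ₗ g) x = F2 f (F2 g x) := by
  simp [F2, rTensor_comp]

theorem F2_id (x : A ⊗[ℂ] (A ⊗[ℂ] C)) :
    F2 LinearMap.id x = x := by
  simp [F2]

/-- induction: an equation of linear maps on `A ⊗ C` can be checked after insertion -/
theorem ext1 {f g : A ⊗[ℂ] C →ₗ[ℂ] D} (h : ∀ (c : C) (a : A), f (ins c a) = g (ins c a))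
    (x : A ⊗[ℂ] C) : f x = g x := by
  induction x using TensorProduct.induction_on with
  | zero => simp
  | tmul w c => exact h c w
  | add x y hx hy => simp only [map_add, hx, hy]

theorem ext2 {f g : A ⊗[ℂ] (A ⊗[ℂ] C) →ₗ[ℂ] D}
    (h : ∀ (c : C) (a : T2 A), f (L (ins c) a) = g (L (ins c) a))
    (x : A ⊗[ℂ] (A ⊗[ℂ] C)) : f x = g x := by
  obtain ⟨x, rfl⟩ := (TensorProduct.assoc ℂ A A C).surjective x
  induction x using TensorProduct.induction_on with
  | zero => simp
  | tmul w c => rw [assoc_ins]; exact h c w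
  | add x y hx hy => simp only [map_add, hx, hy]

/-! the axioms, family form -/
variable (G : BQG A)

theorem F0_ins (f : A →ₗ[ℂ] ℂ) (c : C) (x : A) : F0 f (ins c x) = f x • c := by
  simp [F0, ins]

theorem Lmul {X Y Z : Type*} [AddCommMonoid X] [Module ℂ X] [AddCommMonoid Y] [Module ℂ Y]
    [AddCommMonoid Z] [Module ℂ Z] (f : Y →ₗ[ℂ] Z) (g : X →ₗ[ℂ] Y) (x : A ⊗[ℂ] X) :
    L f (L g x) = L (f ∘ₗ g) x := by simp [L, lTensor_comp]

theorem s_sinv (x : A ⊗[ℂ] (A ⊗[ℂ] C)) : F2 G.σ (F2 G.σ' x) = x := by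
  rw [← F2_comp, G.σ_comp, F2_id]

theorem sinv_s (x : A ⊗[ℂ] (A ⊗[ℂ] C)) : F2 G.σ' (F2 G.σ x) = x := by
  rw [← F2_comp, G.comp_σ, F2_id]

theorem coas (x : A ⊗[ℂ] C) : F1 G.φ (F1 G.φ x) = L (F1 G.φ) (F1 G.φ x) := by
  refine ext1 (f := F1 G.φ ∘ₗ F1 G.φ) (g := L (F1 G.φ) ∘ₗ F1 G.φ) (fun c a => ?_) x
  simp only [LinearMap.comp_apply, F1_ins, F1_nat]
  rw [Lmul]
  have h : F1 G.φ ∘ₗ ins c = L (ins c) ∘ₗ G.φ := LinearMap.ext (F1_ins G.φ c)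
  rw [h, ← Lmul]
  congr 1
  exact LinearMap.congr_fun G.coassoc a

theorem cl (x : A ⊗[ℂ] C) : F0 G.ε (F1 G.φ x) = x := by
  refine ext1 (f := F0 G.ε ∘ₗ F1 G.φ) (g := LinearMap.id) (fun c a => ?_) x
  simp only [LinearMap.comp_apply, F1_ins, F0_nat, LinearMap.id_apply]
  congr 1
  exact LinearMap.congr_fun G.counit_left a

theorem cr (x : A ⊗[ℂ] C) : L (F0 G.ε) (F1 G.φ x) = x := by
  refine ext1 (f := L (F0 G.ε) ∘ₗ F1 G.φ) (g := LinearMap.id) (fun c a => ?_) x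
  simp only [LinearMap.comp_apply, F1_ins, LinearMap.id_apply]
  rw [Lmul]
  have h : ∀ w : T2 A, L (F0 G.ε ∘ₗ ins c) w
      = ins c (((TensorProduct.rid ℂ A).toLinearMap ∘ₗ G.ε.lTensor A) w) := by
    intro w
    induction w using TensorProduct.induction_on with
    | zero => simp
    | tmul w d => simp [L, F0, ins]
    | add x y hx hy => simp only [map_add, hx, hy]
  rw [h]
  congr 1
  exact LinearMap.congr_fun G.counit_right a

theorem anl (x : A ⊗[ℂ] C) : M (K G.κ (F1 G.φ x)) = U (F0 G.ε x) := by
  refine ext1 (f := M ∘ₗ K G.κ ∘ₗ F1 G.φ) (g := U ∘ₗ F0 G.ε) (fun c a => ?_) x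
  simp only [LinearMap.comp_apply, F1_ins, K_nat, M_ins, F0_ins]
  have := LinearMap.congr_fun G.antipode_left a
  simp only [LinearMap.comp_apply] at this
  simp only [K]
  rw [this]
  simp [ins, U, Algebra.algebraMap_eq_smul_one]

theorem anr (x : A ⊗[ℂ] C) : M (L (K G.κ) (F1 G.φ x)) = U (F0 G.ε x) := by
  refine ext1 (f := M ∘ₗ L (K G.κ) ∘ₗ F1 G.φ) (g := U ∘ₗ F0 G.ε) (fun c a => ?_) x
  simp only [LinearMap.comp_apply, F1_ins, F0_ins]
  have h : K G.κ ∘ₗ ins c = ins c ∘ₗ G.κ := LinearMap.ext (K_ins G.κ c)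
  rw [Lmul, h, ← Lmul, M_ins]
  have := LinearMap.congr_fun G.antipode_right a
  simp only [LinearMap.comp_apply] at this
  simp only [L]
  rw [this]
  simp [ins, U, Algebra.algebraMap_eq_smul_one]

theorem Fins1 (f : A →ₗ[ℂ] T2 A) (c : C) : F1 f ∘ₗ ins c = L (ins c) ∘ₗ f :=
  LinearMap.ext (F1_ins f c)
theorem Fins2 (f : T2 A →ₗ[ℂ] T2 A) (c : C) : F2 f ∘ₗ L (ins c) = L (ins c) ∘ₗ f :=
  LinearMap.ext (F2_ins f c)
theorem Mins (c : C) : M ∘ₗ L (ins c) = ins c ∘ₗ mA (A := A) :=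
  LinearMap.ext (M_ins c)
theorem Fnat1 (f : A →ₗ[ℂ] T2 A) (g : C →ₗ[ℂ] D) : F1 f ∘ₗ L g = L (L g) ∘ₗ F1 f :=
  LinearMap.ext (F1_nat f g)
theorem Fnat2 (f : T2 A →ₗ[ℂ] T2 A) (g : C →ₗ[ℂ] D) :
    F2 f ∘ₗ L (L g) = L (L (A := A) g) ∘ₗ F2 f :=
  LinearMap.ext (F2_nat f g)

theorem L2 {f : D →ₗ[ℂ] B} {g : C →ₗ[ℂ] D} {D' : Type*} [AddCommMonoid D'] [Module ℂ D']
    {f' : D' →ₗ[ℂ] B} {g' : C →ₗ[ℂ] D'} (h : f ∘ₗ g = f' ∘ₗ g') (x : A ⊗[ℂ] C) :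
    L f (L g x) = L f' (L g' x) := by rw [Lmul, Lmul, h]

theorem cm (x : A ⊗[ℂ] (A ⊗[ℂ] C)) :
    F1 G.φ (M x) = M (L (L M) (L (F2 G.σ) (F1 G.φ (L (F1 G.φ) x)))) := by
  refine ext2 (f := F1 G.φ ∘ₗ M)
    (g := M ∘ₗ L (L M) ∘ₗ L (F2 G.σ) ∘ₗ F1 G.φ ∘ₗ L (F1 G.φ)) (fun c a => ?_) x
  simp only [LinearMap.comp_apply, M_ins, F1_ins]
  rw [L2 (Fins1 G.φ c), F1_nat, L2 (Fnat2 G.σ (ins c)), Lmul (L M), ← lTensor_comp, Mins]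
  have := LinearMap.congr_fun G.comul_mul a
  simp only [LinearMap.comp_apply] at this
  rw [this, lTensor_comp, ← Lmul (L (ins c)), M_nat]
  rfl

theorem mixed (x : A ⊗[ℂ] (A ⊗[ℂ] C)) :
    F2 G.σ (L (F1 G.φ) (F2 G.σ' (L (F1 G.φ) x)))
      = L (L (F2 G.σ)) (L (F1 G.φ) (L (F2 G.σ') (F1 G.φ x))) := by
  refine ext2 (f := F2 G.σ ∘ₗ L (F1 G.φ) ∘ₗ F2 G.σ' ∘ₗ L (F1 G.φ))
    (g := L (L (F2 G.σ)) ∘ₗ L (F1 G.φ) ∘ₗ L (F2 G.σ') ∘ₗ F1 G.φ) (fun c a => ?_) x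
  simp only [LinearMap.comp_apply]
  rw [L2 (Fins1 G.φ c), F2_nat, L2 (Fnat1 G.φ (ins c)), F2_nat, F1_nat, L2 (Fins2 G.σ' c),
    L2 (Fnat1 G.φ (ins c)), Lmul (L _), ← lTensor_comp,
    Fins2, lTensor_comp, ← Lmul (L (L _))]
  congr 1
  exact LinearMap.congr_fun G.mixed_coassoc a

/-! lifting laws through `L` -/
section lift
variable {X Y Y' Z Z' W : Type*} [AddCommMonoid X] [Module ℂ X] [AddCommMonoid Y] [Module ℂ Y]
  [AddCommMonoid Y'] [Module ℂ Y'] [AddCommMonoid Z] [Module ℂ Z] [AddCommMonoid Z'] [Module ℂ Z']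
  [AddCommMonoid W] [Module ℂ W]

theorem l20 {f : Y →ₗ[ℂ] X} {g : X →ₗ[ℂ] Y} (h : ∀ y, f (g y) = y) (x : A ⊗[ℂ] X) :
    L f (L g x) = x := by
  rw [Lmul, show f ∘ₗ g = LinearMap.id from LinearMap.ext h]; simp [L]

theorem l21 {f : Y →ₗ[ℂ] Z} {g : X →ₗ[ℂ] Y} {k : X →ₗ[ℂ] Z} (h : ∀ y, f (g y) = k y)
    (x : A ⊗[ℂ] X) : L f (L g x) = L k x := by
  rw [Lmul, show f ∘ₗ g = k from LinearMap.ext h]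

theorem l22 {f : Y →ₗ[ℂ] Z} {g : X →ₗ[ℂ] Y} {f' : Y' →ₗ[ℂ] Z} {g' : X →ₗ[ℂ] Y'}
    (h : ∀ y, f (g y) = f' (g' y))
    (x : A ⊗[ℂ] X) : L f (L g x) = L f' (L g' x) := L2 (LinearMap.ext h) x

theorem l31 {f : Z →ₗ[ℂ] W} {g : Y →ₗ[ℂ] Z} {k : X →ₗ[ℂ] Y} {f' : X →ₗ[ℂ] W}
    (h : ∀ y, f (g (k y)) = f' y)
    (x : A ⊗[ℂ] X) : L f (L g (L k x)) = L f' x := by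
  rw [Lmul g, Lmul f, show f ∘ₗ g ∘ₗ k = f' from LinearMap.ext h]

theorem l32 {f : Z →ₗ[ℂ] W} {g : Y →ₗ[ℂ] Z} {k : X →ₗ[ℂ] Y} {f' : Y' →ₗ[ℂ] W} {g' : X →ₗ[ℂ] Y'}
    (h : ∀ y, f (g (k y)) = f' (g' y))
    (x : A ⊗[ℂ] X) : L f (L g (L k x)) = L f' (L g' x) := by
  rw [Lmul g]; exact l22 (g := g ∘ₗ k) h x

theorem l23 {f : Y →ₗ[ℂ] W} {g : X →ₗ[ℂ] Y} {f' : Z →ₗ[ℂ] W} {g' : Y' →ₗ[ℂ] Z} {k : X →ₗ[ℂ] Y'}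
    (h : ∀ y, f (g y) = f' (g' (k y)))
    (x : A ⊗[ℂ] X) : L f (L g x) = L f' (L g' (L k x)) := by
  rw [Lmul g']; exact l22 (g' := g' ∘ₗ k) h x

end lift

/-- `εm` -/
def E : A ⊗[ℂ] (A ⊗[ℂ] C) →ₗ[ℂ] C := F0 G.ε ∘ₗ M

theorem E_nat (g : C →ₗ[ℂ] D) (x : A ⊗[ℂ] (A ⊗[ℂ] C)) : E G (L (L g) x) = g (E G x) := by
  simp only [E, LinearMap.comp_apply, M_nat, F0_nat]

/-- `(id ⊗ εm)(σ ⊗ id)(id ⊗ φ)` -/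
def X : A ⊗[ℂ] (A ⊗[ℂ] C) →ₗ[ℂ] A ⊗[ℂ] C := L (E G) ∘ₗ F2 G.σ ∘ₗ L (F1 G.φ)

theorem X_def (x : A ⊗[ℂ] (A ⊗[ℂ] C)) : L (E G) (F2 G.σ (L (F1 G.φ) x)) = X G x := rfl

/-- `(εm ⊗ id)(id ⊗ σ)(φ ⊗ id)` -/
def Z : A ⊗[ℂ] (A ⊗[ℂ] C) →ₗ[ℂ] A ⊗[ℂ] C := E G ∘ₗ L (F2 G.σ) ∘ₗ F1 G.φ

theorem Z_def (x : A ⊗[ℂ] (A ⊗[ℂ] C)) : E G (L (F2 G.σ) (F1 G.φ x)) = Z G x := rfl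

theorem Z_nat (g : C →ₗ[ℂ] D) (x : A ⊗[ℂ] (A ⊗[ℂ] C)) : Z G (L (L g) x) = L g (Z G x) := by
  rw [← Z_def, F1_nat, l22 (F2_nat G.σ g), E_nat, Z_def]

theorem M_X (x : A ⊗[ℂ] (A ⊗[ℂ] C)) : M (L (X G) (F1 G.φ x)) = M x := by
  have h := cr G (M x)
  rw [cm, ← M_nat, l21 (g := L M) (k := L (E G)) (fun y => l21 (fun z => rfl) y), F1_nat] at h
  rw [← h, l31 (fun y => X_def G y)]

theorem X_eq (x : A ⊗[ℂ] (A ⊗[ℂ] C)) : X G x = F0 G.ε x := by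
  have h : M (K G.κ (L M (L (L (X G)) (L (F1 G.φ) (F1 G.φ x))))) = M (K G.κ (L M (F1 G.φ x))) := by
    rw [l31 (fun y => M_X G y)]
  have h2 : M (K G.κ (L M (F1 G.φ x))) = F0 G.ε x := by rw [K_nat, M_M, anl, M_U]
  rw [h2, ← coas, K_nat, K_nat, M_M, M_nat, anl, cl, ← U_nat, M_U] at h
  exact h

theorem M_Z (x : A ⊗[ℂ] (A ⊗[ℂ] C)) : M (Z G (L (F1 G.φ) x)) = M x := by
  have h := cl G (M x)
  rw [cm, show ∀ y, F0 G.ε (M y) = E G y from fun _ => rfl, E_nat] at h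
  exact h

theorem LKU (x : A ⊗[ℂ] (A ⊗[ℂ] C)) :
    L M (L (L (K G.κ)) (L (F1 G.φ) x)) = L U (L (F0 G.ε) x) := l32 (anr G) x

theorem Z_eq (x : A ⊗[ℂ] (A ⊗[ℂ] C)) : Z G x = L (F0 G.ε) x := by
  have h : M (L (K G.κ) (M (Z G (L (F1 G.φ) (L (F1 G.φ) x)))))
      = M (L (K G.κ) (M (L (F1 G.φ) x))) := by rw [M_Z]
  have h2 : M (L (K G.κ) (M (L (F1 G.φ) x))) = L (F0 G.ε) x := by
    rw [← M_nat, ← M_M, LKU, M_LU]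
  rw [h2, ← M_nat, ← M_M, ← Z_nat, ← Z_nat, l22 (coas G), l32 (LKU G), Z_nat, M_LU,
    l20 (cr G)] at h
  exact h

/-- `(id²⊗ε)(id⊗σ)(φ⊗id)` -/
def Q : A ⊗[ℂ] (A ⊗[ℂ] C) →ₗ[ℂ] A ⊗[ℂ] (A ⊗[ℂ] C) := L (L (F0 G.ε)) ∘ₗ L (F2 G.σ) ∘ₗ F1 G.φ

theorem Q_def (x : A ⊗[ℂ] (A ⊗[ℂ] C)) :
    L (L (F0 G.ε)) (L (F2 G.σ) (F1 G.φ x)) = Q G x := rfl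

/-- `(ε⊗id²)(σ⊗id)(id⊗φ)` -/
def T : A ⊗[ℂ] (A ⊗[ℂ] C) →ₗ[ℂ] A ⊗[ℂ] (A ⊗[ℂ] C) := F0 G.ε ∘ₗ F2 G.σ ∘ₗ L (F1 G.φ)

theorem T_def (x : A ⊗[ℂ] (A ⊗[ℂ] C)) :
    F0 G.ε (F2 G.σ (L (F1 G.φ) x)) = T G x := rfl

theorem N2 (x : A ⊗[ℂ] (A ⊗[ℂ] C)) :
    F2 G.σ (L (F1 G.φ) (F2 G.σ' x)) = L (Q G) (L (F2 G.σ') (F1 G.φ x)) := by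
  have h := congrArg (L (L (L (F0 G.ε)))) (mixed G x)
  rw [← F2_nat, ← l22 (F1_nat G.φ (F0 G.ε)), ← F2_nat, l20 (cr G)] at h
  rw [h, l31 (Q_def G)]

theorem N1 (x : A ⊗[ℂ] (A ⊗[ℂ] C)) :
    T G (F2 G.σ' (L (F1 G.φ) x)) = L (F2 G.σ) (F1 G.φ (F2 G.σ' x)) := by
  have h := congrArg (F0 G.ε) (mixed G x)
  rw [F0_nat, F0_nat, F0_nat, cl] at h
  exact h

theorem T_eq (x : A ⊗[ℂ] (A ⊗[ℂ] C)) : T G x = Q G x := by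
  have h := congrArg (F0 G.ε) (N2 G (F2 G.σ x))
  rw [F0_nat, F0_nat, cl, sinv_s] at h
  exact h

theorem Q_l (x : A ⊗[ℂ] (A ⊗[ℂ] C)) : F1 G.φ (Q G x) = L (Q G) (F1 G.φ x) := by
  rw [← Q_def, F1_nat, F1_nat, coas, l31 (Q_def G)]

theorem Q_r (x : A ⊗[ℂ] (A ⊗[ℂ] C)) : L (F1 G.φ) (Q G x) = Q G (L (F1 G.φ) x) := by
  rw [← T_eq, ← T_eq, ← T_def, ← F0_nat, ← F2_nat, ← l22 (coas G), T_def]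

/-- `(id⊗εm⊗id)(φ⊗φ)` -/
def R : A ⊗[ℂ] (A ⊗[ℂ] C) →ₗ[ℂ] A ⊗[ℂ] (A ⊗[ℂ] C) := L (E G) ∘ₗ F1 G.φ ∘ₗ L (F1 G.φ)

theorem R_def (x : A ⊗[ℂ] (A ⊗[ℂ] C)) : L (E G) (F1 G.φ (L (F1 G.φ) x)) = R G x := rfl

theorem R_nat (g : C →ₗ[ℂ] D) (x : A ⊗[ℂ] (A ⊗[ℂ] C)) :
    R G (L (L g) x) = L (L g) (R G x) := by
  rw [← R_def, l22 (F1_nat G.φ g), F1_nat, l22 (E_nat G (L g)), R_def]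

theorem E_Q (x : A ⊗[ℂ] (A ⊗[ℂ] C)) : E G (Q G x) = F0 G.ε (L (F0 G.ε) x) := by
  rw [← Q_def, E_nat, Z_def, Z_eq]

theorem R_Q (x : A ⊗[ℂ] (A ⊗[ℂ] C)) : R G (Q G x) = x := by
  rw [← R_def, Q_r, Q_l, l22 (E_Q G), ← F1_nat, cr, l20 (cl G)]

theorem R_l (x : A ⊗[ℂ] (A ⊗[ℂ] C)) : F1 G.φ (R G x) = L (R G) (F1 G.φ x) := by
  rw [← R_def, F1_nat, coas, F1_nat, l31 (R_def G)]

theorem R_r (x : A ⊗[ℂ] (A ⊗[ℂ] C)) : L (F1 G.φ) (R G x) = R G (L (F1 G.φ) x) := by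
  rw [← R_def, ← l22 (E_nat G (F1 G.φ)), ← F1_nat, ← l22 (coas G), R_def]

theorem W2 (x : A ⊗[ℂ] (A ⊗[ℂ] C)) :
    L (F1 G.φ) (F2 G.σ x) = F2 G.σ (R G (L (F2 G.σ) (F1 G.φ x))) := by
  have h := N1 G (F2 G.σ x)
  rw [sinv_s, T_eq] at h
  rw [← h, R_Q, s_sinv]

theorem W1 (x : A ⊗[ℂ] (A ⊗[ℂ] C)) :
    F1 G.φ (F2 G.σ x) = L (F2 G.σ) (L (R G) (F2 G.σ (L (F1 G.φ) x))) := by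
  have h := N2 G (F2 G.σ x)
  rw [sinv_s] at h
  rw [h, l20 (R_Q G), l20 (s_sinv G)]

/-- `τσ⁻¹` -/
def P : A ⊗[ℂ] (A ⊗[ℂ] C) →ₗ[ℂ] A ⊗[ℂ] (A ⊗[ℂ] C) := L (L (F0 G.ε)) ∘ₗ L (F2 G.σ') ∘ₗ F1 G.φ

theorem P_def (x : A ⊗[ℂ] (A ⊗[ℂ] C)) :
    L (L (F0 G.ε)) (L (F2 G.σ') (F1 G.φ x)) = P G x := rfl

/-- `(ε⊗id²)(σ⁻¹⊗id)(id⊗φ)` -/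
def S : A ⊗[ℂ] (A ⊗[ℂ] C) →ₗ[ℂ] A ⊗[ℂ] (A ⊗[ℂ] C) := F0 G.ε ∘ₗ F2 G.σ' ∘ₗ L (F1 G.φ)

theorem S_def (x : A ⊗[ℂ] (A ⊗[ℂ] C)) :
    F0 G.ε (F2 G.σ' (L (F1 G.φ) x)) = S G x := rfl

theorem P_l (x : A ⊗[ℂ] (A ⊗[ℂ] C)) : F1 G.φ (P G x) = L (P G) (F1 G.φ x) := by
  rw [← P_def, F1_nat, F1_nat, coas, l31 (P_def G)]

theorem S_r (x : A ⊗[ℂ] (A ⊗[ℂ] C)) : L (F1 G.φ) (S G x) = S G (L (F1 G.φ) x) := by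
  rw [← S_def, ← F0_nat, ← F2_nat, ← l22 (coas G), S_def]

theorem eR (x : A ⊗[ℂ] (A ⊗[ℂ] C)) : L (F0 G.ε) (R G x) = L (E G) (F1 G.φ x) := by
  rw [← R_def, ← l22 (E_nat G (F0 G.ε)), ← F1_nat, l20 (cr G)]

theorem eR_left (x : A ⊗[ℂ] (A ⊗[ℂ] C)) : F0 G.ε (R G x) = E G (L (F1 G.φ) x) := by
  rw [← R_def, F0_nat, cl]

theorem P_s (x : A ⊗[ℂ] (A ⊗[ℂ] C)) : P G (F2 G.σ x) = F2 G.σ (R G x) := by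
  rw [← P_def, W1, l20 (sinv_s G), l22 (eR G), W2, ← F2_nat, ← R_nat, F1_nat, l31 (X_def G),
    Lc (X_eq G), cr]

theorem S_s (x : A ⊗[ℂ] (A ⊗[ℂ] C)) : S G (F2 G.σ x) = F2 G.σ (R G x) := by
  rw [← S_def, W2, sinv_s, eR_left,
    l23 (f' := L (F2 G.σ ∘ₗ R G)) (fun y => (W1 G y).trans (Lmul _ _ _)), E_nat,
    ← F1_nat, Z_def, Z_eq, l20 (cl G)]
  rfl

theorem P_eq (x : A ⊗[ℂ] (A ⊗[ℂ] C)) : P G x = S G x := by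
  rw [← s_sinv G x, P_s, S_s]

theorem P_r (x : A ⊗[ℂ] (A ⊗[ℂ] C)) : L (F1 G.φ) (P G x) = P G (L (F1 G.φ) x) := by
  rw [P_eq, P_eq, S_r]

theorem F0_ins_comp (c : C) (w : T2 A) : L (F0 G.ε ∘ₗ ins c) w
      = ins c (((TensorProduct.rid ℂ A).toLinearMap ∘ₗ G.ε.lTensor A) w) := by
  induction w using TensorProduct.induction_on with
  | zero => simp
  | tmul w d => simp [L, F0, ins]
  | add x y hx hy => simp only [map_add, hx, hy]

theorem F2_tau (x : A ⊗[ℂ] (A ⊗[ℂ] C)) : F2 G.τ x = P G (F2 G.σ x) := by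
  refine ext2 (f := F2 G.τ) (g := P G ∘ₗ F2 G.σ) (fun c a => ?_) x
  rw [LinearMap.comp_apply, F2_ins, F2_ins, ← P_def, F1_nat, l22 (F2_ins G.σ' c)]
  rw [l22 (f' := ins c) (g' := (TensorProduct.rid ℂ A).toLinearMap ∘ₗ G.ε.lTensor A)
    (fun w => (Lmul _ _ w).trans (F0_ins_comp G c w))]
  rfl

theorem P_X (τ' : T2 A →ₗ[ℂ] T2 A) (h : G.τ ∘ₗ τ' = LinearMap.id) (x : A ⊗[ℂ] (A ⊗[ℂ] C)) :
    P G (F2 (G.σ ∘ₗ τ') x) = x := by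
  rw [F2_comp, ← F2_tau, ← F2_comp, h, F2_id]

theorem X_P (τ' : T2 A →ₗ[ℂ] T2 A) (h : τ' ∘ₗ G.τ = LinearMap.id) (x : A ⊗[ℂ] (A ⊗[ℂ] C)) :
    F2 (G.σ ∘ₗ τ') (P G x) = x := by
  conv_lhs => rw [← s_sinv G x, ← F2_tau, ← F2_comp, LinearMap.comp_assoc, h, LinearMap.comp_id]
  exact s_sinv G x

theorem comm (f g : T2 A →ₗ[ℂ] T2 A)
    (hf : ∀ x : A ⊗[ℂ] (A ⊗[ℂ] (A ⊗[ℂ] ℂ)), L (F1 G.φ) (F2 f x) = F2 f (L (F1 G.φ) x))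
    (hg : ∀ x : A ⊗[ℂ] (A ⊗[ℂ] ℂ), F1 G.φ (F2 g x) = L (F2 g) (F1 G.φ x)) :
    op12 f ∘ₗ op23 g = op23 g ∘ₗ op12 f := by
  have key : ∀ x : A ⊗[ℂ] (A ⊗[ℂ] (A ⊗[ℂ] ℂ)), F2 f (L (F2 g) x) = L (F2 g) (F2 f x) := by
    intro x
    have h1 : F2 f (L (F2 g) x) = L (L (F0 G.ε)) (L (F1 G.φ) (F2 f (L (F2 g) x))) :=
      (l20 (cr G) _).symm
    have h2 : L (F2 g) (F2 f x) = L (L (F0 G.ε)) (L (F1 G.φ) (L (F2 g) (F2 f x))) :=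
      (l20 (cr G) _).symm
    rw [h1, h2, hf, l22 hg, F2_nat, ← hf, l22 hg]
  have inj : Function.Injective (L (L (ins (1 : ℂ))) : T3 A →ₗ[ℂ] A ⊗[ℂ] (A ⊗[ℂ] (A ⊗[ℂ] ℂ))) := by
    refine Function.LeftInverse.injective (g := L (L (TensorProduct.rid ℂ A).toLinearMap)) ?_
    intro x
    exact l20 (fun y => l20 (fun z => by simp [ins]) y) x
  refine LinearMap.ext fun x => inj ?_
  have e1 : ∀ y, op12 f y = F2 f y := fun y => rfl
  have e2 : ∀ y, op23 g y = L g y := fun y => rfl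
  rw [LinearMap.comp_apply, LinearMap.comp_apply, e1, e1, e2, e2, ← F2_nat, ← l22 (F2_ins g 1),
    ← l22 (F2_ins g 1), key, F2_nat]

end
end BQGaux

/-- Commutation relations among `στ⁻¹` and `σ⁻¹τ` (for any inverse `τ'` of `τ`). -/
theorem bqg_sigma_tau_commutation {A : Type*} [Ring A] [Algebra ℂ A] (G : BQG A)
    (τ' : T2 A →ₗ[ℂ] T2 A) (hττ' : G.τ ∘ₗ τ' = LinearMap.id)
    (hτ'τ : τ' ∘ₗ G.τ = LinearMap.id) :
    op12 (G.σ ∘ₗ τ') ∘ₗ op23 (G.σ ∘ₗ τ') = op23 (G.σ ∘ₗ τ') ∘ₗ op12 (G.σ ∘ₗ τ') ∧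
    op12 (G.σ ∘ₗ τ') ∘ₗ op23 (G.σ' ∘ₗ G.τ) = op23 (G.σ' ∘ₗ G.τ) ∘ₗ op12 (G.σ ∘ₗ τ') ∧
    op12 (G.σ' ∘ₗ G.τ) ∘ₗ op23 (G.σ' ∘ₗ G.τ)
      = op23 (G.σ' ∘ₗ G.τ) ∘ₗ op12 (G.σ' ∘ₗ G.τ) := by 
  have hR : ∀ x : A ⊗[ℂ] (A ⊗[ℂ] ℂ), BQGaux.F2 (G.σ' ∘ₗ G.τ) x = BQGaux.R G x := by
    intro x
    rw [BQGaux.F2_comp, BQGaux.F2_tau, BQGaux.P_s, BQGaux.sinv_s]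
  have hRtwo : ∀ x : A ⊗[ℂ] (A ⊗[ℂ] (A ⊗[ℂ] ℂ)), BQGaux.F2 (G.σ' ∘ₗ G.τ) x = BQGaux.R G x := by
    intro x
    rw [BQGaux.F2_comp, BQGaux.F2_tau, BQGaux.P_s, BQGaux.sinv_s]
  have hRthree : ∀ x : A ⊗[ℂ] (A ⊗[ℂ] (A ⊗[ℂ] (A ⊗[ℂ] ℂ))),
      BQGaux.F2 (G.σ' ∘ₗ G.τ) x = BQGaux.R G x := by
    intro x
    rw [BQGaux.F2_comp, BQGaux.F2_tau, BQGaux.P_s, BQGaux.sinv_s]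
  have Rl : ∀ x : A ⊗[ℂ] (A ⊗[ℂ] ℂ), BQGaux.F1 G.φ (BQGaux.F2 (G.σ' ∘ₗ G.τ) x)
      = BQGaux.L (BQGaux.F2 (G.σ' ∘ₗ G.τ)) (BQGaux.F1 G.φ x) := by
    intro x
    rw [hR, BQGaux.R_l, BQGaux.Lc hR]
  have Rr : ∀ x : A ⊗[ℂ] (A ⊗[ℂ] (A ⊗[ℂ] ℂ)),
      BQGaux.L (BQGaux.F1 G.φ) (BQGaux.F2 (G.σ' ∘ₗ G.τ) x)
      = BQGaux.F2 (G.σ' ∘ₗ G.τ) (BQGaux.L (BQGaux.F1 G.φ) x) := by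
    intro x
    rw [hRtwo, hRthree, BQGaux.R_r]
  have Xl : ∀ x : A ⊗[ℂ] (A ⊗[ℂ] ℂ), BQGaux.F1 G.φ (BQGaux.F2 (G.σ ∘ₗ τ') x)
      = BQGaux.L (BQGaux.F2 (G.σ ∘ₗ τ')) (BQGaux.F1 G.φ x) := by
    intro x
    conv_rhs => rw [← BQGaux.P_X G τ' hττ' x, BQGaux.P_l, BQGaux.l20 (BQGaux.X_P G τ' hτ'τ)]
  have Xr : ∀ x : A ⊗[ℂ] (A ⊗[ℂ] (A ⊗[ℂ] ℂ)),
      BQGaux.L (BQGaux.F1 G.φ) (BQGaux.F2 (G.σ ∘ₗ τ') x)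
      = BQGaux.F2 (G.σ ∘ₗ τ') (BQGaux.L (BQGaux.F1 G.φ) x) := by
    intro x
    conv_rhs => rw [← BQGaux.P_X G τ' hττ' x, BQGaux.P_r, BQGaux.X_P G τ' hτ'τ]
  exact ⟨BQGaux.comm G _ _ Xr Xl, BQGaux.comm G _ _ Xr Rl, BQGaux.comm G _ _ Rr Rl⟩
end
end
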